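/- Let g : (0,∞) → ℝ be smooth and compactly supported, let q ≥ 1 and d be integers with gcd(d,q) = 1. Then Σ_{n=1}^∞ d(n) e(nd/q) g(n) = q^{−1} ∫_0^∞ (log x + 2γ − 2 log q) g(x) dx + Σ_{n=1}^∞ d(n) e(−n d̄/q) g₁(n) + Σ_{n=1}^∞ d(n) e(n d̄/q) g₂(n), where g₁(n) = −(2π/q) ∫_0^∞ g(x) Y₀(4π√(nx)/q) dx and g₂(n) = (4/q) ∫_0^∞ g(x) K₀(4π√(nx)/q) dx, and d̄ denotes the inverse of d modulo q. -/

import Mathlib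

open Real MeasureTheory

noncomputable section

/-- `e(t) = exp(2πit)`. -/
def e2pi (t : ℝ) : ℂ := Complex.exp (2 * Real.pi * Complex.I * t)

/-- Kloosterman sum `S(m, n; q)`. -/
def kloosterman (m n : ℤ) (q : ℕ) : ℂ :=
  ∑ x ∈ (Finset.range q).filter (fun x => Nat.Coprime x q),
    e2pi ((((m * x + n * ((((x : ZMod q))⁻¹).val : ℤ)) : ℤ) : ℝ) / q)

/-- The divisor function `d(n)`. -/
def dd (n : ℕ) : ℕ := n.divisors.card

/-- The `k`-fold divisor function. -/
def dk : ℕ → ℕ → ℕ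
  | 0, n => if n = 1 then 1 else 0
  | (k+1), n => ∑ m ∈ n.divisors, dk k (n / m)

/-- An admissible weight supported in `[X,2X] × [X,2X]`. -/
def AdmissibleWeight (X : ℝ) (f : ℝ → ℝ → ℝ) : Prop :=
  ContDiff ℝ (⊤ : ℕ∞) (fun p : ℝ × ℝ => f p.1 p.2) ∧
  (∀ x y : ℝ, f x y ≠ 0 → x ∈ Set.Icc X (2*X) ∧ y ∈ Set.Icc X (2*X)) ∧
  ∀ (i j : ℕ) (x y : ℝ),
    |iteratedDeriv i (fun x' => iteratedDeriv j (fun y' => f x' y') y) x| ≤ X ^ (-(i:ℝ) - (j:ℝ))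

def Hk (k : ℕ) : ℝ := ∑ j ∈ Finset.range k, 1/((j:ℝ)+1)

def besselJ0 (z : ℝ) : ℝ := ∑' k : ℕ, (-1)^k * (z/2)^(2*k) / ((Nat.factorial k : ℝ))^2

def besselI0 (z : ℝ) : ℝ := ∑' k : ℕ, (z/2)^(2*k) / ((Nat.factorial k : ℝ))^2

def besselY0 (z : ℝ) : ℝ :=
  (2/Real.pi) * ((Real.log (z/2) + Real.eulerMascheroniConstant) * besselJ0 z
    + ∑' k : ℕ, (-1)^k * Hk (k+1) * (z/2)^(2*(k+1)) / ((Nat.factorial (k+1) : ℝ))^2)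

def besselK0 (z : ℝ) : ℝ :=
  -(Real.log (z/2) + Real.eulerMascheroniConstant) * besselI0 z
    + ∑' k : ℕ, Hk (k+1) * (z/2)^(2*(k+1)) / ((Nat.factorial (k+1) : ℝ))^2

def besselJn (ν : ℕ) (z : ℝ) : ℝ :=
  ∑' m : ℕ, (-1)^m * (z/2)^(2*m+ν) / ((Nat.factorial m : ℝ) * (Nat.factorial (m+ν) : ℝ))

/-!
For `re s > 2` consider `∑ m ^ (-s) e(m n d / q) g(m n)` over positive `m`, `n`. Poisson summation
in `n` turns it into a sum of `m ^ (-s - 1) ĝ(l / (q m))` over pairs with `l ≡ -m d (mod q)`, that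
is `m ≡ -d̄ l (mod q)`, and a second Poisson summation, in `m` over this residue class, produces the
dual phases `e(∓ n d̄ / q)`. The term `l = 0` of the first summation contributes `ζ(1 + s) ĝ(0)`,
and the zero frequency of the second one contributes `ζ(s)` times Mellin transforms of `ĝ`, which
the functional equation turns into `ζ(1 - s)` times the Mellin transform of `g` at `1 - s`. Both
sides continue to `s = 0`; there the poles of the two zeta factors cancel and leave the integral of
`(log x + 2 γ - 2 log q) g(x)`.

The dual weights at `s = 0` are integrals `∫ ĝ(± u) exp (∓ 2 π i n / (q² u)) du / u`. Inserting the
Laplace transform representing `ĝ` gives `∫ g(x) k(x) dx`, where `k` is a boundary value on the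
imaginary axes of the Macdonald integral `∫ exp (-(a t + c / t)) dt / t = 2 K₀(2 √(a c))`. That
integral is identified with its logarithmic power series through the differential equation, and the
rotations of the two signs combine to `-2 π Y₀` and `4 K₀`.
-/

namespace Voronoi

open Filter Topology Set Asymptotics
open scoped SchwartzMap FourierTransform

/-! ### Mellin transforms twisted by `exp (-c / u)` -/

theorem tendsto_cpow_mul_of_isBigO_rpow {f : ℝ → ℂ} {s : ℂ} {a : ℝ} {l : Filter ℝ}
    (hl : ∀ᶠ t in l, 0 < t) (hf : f =O[l] (· ^ (-a)))
    (h : Tendsto (fun t : ℝ ↦ t ^ (s.re - a)) l (𝓝 0)) :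
    Tendsto (fun t : ℝ ↦ (t : ℂ) ^ s * f t) l (𝓝 0) := by
  have hpow : (fun t : ℝ ↦ (t : ℂ) ^ s) =O[l] (· ^ s.re) :=
    IsBigO.of_bound 1 <| hl.mono fun t ht ↦ by
      rw [Complex.norm_cpow_eq_rpow_re_of_pos ht, one_mul, norm_of_nonneg (by positivity)]
  refine ((hpow.mul hf).congr' .rfl ?_).trans_tendsto h
  filter_upwards [hl] with t ht
  rw [← rpow_add ht, sub_eq_add_neg]

theorem mellin_deriv_add_one {f f' : ℝ → ℂ} {s : ℂ} {a b : ℝ}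
    (hf : ∀ t ∈ Ioi (0 : ℝ), HasDerivAt f (f' t) t)
    (h_top : f =O[atTop] (· ^ (-a))) (hs_top : s.re < a)
    (h_bot : f =O[𝓝[>] 0] (· ^ (-b))) (hs_bot : b < s.re)
    (hf' : MellinConvergent f' (s + 1)) :
    mellin f' (s + 1) = -s * mellin f s := by
  have hpow (t : ℝ) (ht : t ∈ Ioi (0 : ℝ)) :
      HasDerivAt (fun t : ℝ ↦ (t : ℂ) ^ s) (s * (t : ℂ) ^ (s - 1)) t := by
    simpa using ((hasDerivAt_id (t : ℂ)).cpow_const (c := s)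
      (Or.inl (by simpa using ht))).comp_ofReal
  have hconv : MellinConvergent f s := by
    have hcont : ContinuousOn f (Ioi 0) := fun t ht ↦ (hf t ht).continuousAt.continuousWithinAt
    exact mellinConvergent_of_isBigO_rpow (hcont.locallyIntegrableOn measurableSet_Ioi)
      h_top hs_top h_bot hs_bot
  have h_infty := tendsto_cpow_mul_of_isBigO_rpow (s := s) (eventually_gt_atTop 0) h_top
    (by simpa using tendsto_rpow_neg_atTop (sub_pos.2 hs_top))
  have h_zero := tendsto_cpow_mul_of_isBigO_rpow (s := s) self_mem_nhdsWithin h_bot <| by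
    simpa [zero_rpow (sub_pos.2 hs_bot).ne'] using
      (continuousAt_rpow_const 0 _ (Or.inr (sub_pos.2 hs_bot).le)).tendsto.mono_left
        nhdsWithin_le_nhds
  have key := integral_Ioi_mul_deriv_eq_deriv_mul (u := fun t : ℝ ↦ (t : ℂ) ^ s) hpow hf
    (by simpa [MellinConvergent, Pi.mul_def] using hf')
    (by simpa [IntegrableOn, Pi.mul_def, mul_assoc] using hconv.const_mul s) h_zero h_infty
  simpa [mellin, mul_assoc, integral_const_mul] using key

/-- Continuous functions on `(0, ∞)` which are bounded near `0` and decay faster than any power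
at `∞`; their Mellin transform converges on the right half plane. -/
structure RapidlyDecaying (φ : ℝ → ℂ) : Prop where
  continuousOn : ContinuousOn φ (Ioi 0)
  isBigO_zero : φ =O[𝓝[>] 0] (fun _ ↦ (1 : ℝ))
  isBigO_atTop : ∀ a : ℝ, φ =O[atTop] (· ^ (-a))

/-- The Mellin transform of `φ` against `exp (-c / u)`. For `φ` the Fourier transform of a test
function these integrals appear in Poisson summation over the divisors of `n`; for
`φ t = exp (-(a * t))` they are Macdonald functions. -/
def twistedMellin (φ : ℝ → ℂ) (s c : ℂ) : ℂ := mellin (fun u : ℝ ↦ φ u * Complex.exp (-c / u)) s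

theorem norm_exp_neg_div (c : ℂ) (u : ℝ) : ‖Complex.exp (-c / u)‖ = rexp (-(c.re / u)) := by
  rw [Complex.norm_exp, Complex.div_ofReal_re, Complex.neg_re, neg_div]

theorem norm_exp_neg_div_le_one {c : ℂ} (hc : 0 ≤ c.re) {u : ℝ} (hu : 0 < u) :
    ‖Complex.exp (-c / u)‖ ≤ 1 := by
  rw [norm_exp_neg_div, exp_le_one_iff]
  simpa using div_nonneg hc hu.le

theorem continuousOn_exp_neg_div (c : ℂ) :
    ContinuousOn (fun u : ℝ ↦ Complex.exp (-c / u)) (Ioi 0) :=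
  (continuousOn_const.div Complex.continuous_ofReal.continuousOn fun _ hu ↦
    Complex.ofReal_ne_zero.2 (ne_of_gt hu)).cexp

theorem isBigO_exp_neg_div_zero {c : ℂ} (hc : 0 < c.re) (b : ℝ) :
    (fun u : ℝ ↦ Complex.exp (-c / u)) =O[𝓝[>] 0] (· ^ (-b)) := by
  have hexp := (isLittleO_exp_neg_mul_rpow_atTop hc b).isBigO.comp_tendsto
    (tendsto_inv_nhdsGT_zero (𝕜 := ℝ))
  refine IsBigO.of_norm_left (hexp.congr' (.of_forall fun u ↦ ?_) ?_)
  · simp only [Function.comp_apply, norm_exp_neg_div]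
    ring_nf
  · filter_upwards [self_mem_nhdsWithin] with u hu
    rw [Function.comp_apply, inv_rpow (le_of_lt hu), rpow_neg (le_of_lt hu)]

theorem rapidlyDecaying_schwartz (H : 𝓢(ℝ, ℂ)) : RapidlyDecaying H where
  continuousOn := H.continuous.continuousOn
  isBigO_zero := (H.continuous.tendsto 0).isBigO_one ℝ |>.mono nhdsWithin_le_nhds
  isBigO_atTop a := by
    refine ((H.isBigO_cocompact_rpow (-a)).mono _root_.atTop_le_cocompact).congr' .rfl ?_
    filter_upwards [eventually_gt_atTop 0] with x hx
    rw [norm_of_nonneg hx.le]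

theorem rapidlyDecaying_exp {a : ℂ} (ha : 0 < a.re) :
    RapidlyDecaying fun t : ℝ ↦ Complex.exp (-(a * t)) where
  continuousOn := by fun_prop
  isBigO_zero :=
    ((by fun_prop : Continuous fun t : ℝ ↦ Complex.exp (-(a * t))).tendsto 0).isBigO_one ℝ
      |>.mono nhdsWithin_le_nhds
  isBigO_atTop r := IsBigO.of_norm_left <|
    (isLittleO_exp_neg_mul_rpow_atTop ha (-r)).isBigO.congr_left fun t ↦ by
      simp [Complex.norm_exp]

namespace RapidlyDecaying

variable {φ ψ : ℝ → ℂ} {s c : ℂ}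

theorem mul_exp_neg_div (hφ : RapidlyDecaying φ) (hc : 0 ≤ c.re) :
    RapidlyDecaying fun u : ℝ ↦ φ u * Complex.exp (-c / u) := by
  have bound {l : Filter ℝ} (hl : ∀ᶠ u in l, 0 < u) :
      (fun u : ℝ ↦ φ u * Complex.exp (-c / u)) =O[l] φ :=
    IsBigO.of_bound 1 <| hl.mono fun u hu ↦ by
      simpa [mul_comm] using
        mul_le_mul_of_nonneg_left (norm_exp_neg_div_le_one hc hu) (norm_nonneg (φ u))
  exact ⟨hφ.continuousOn.mul (continuousOn_exp_neg_div c),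
    (bound self_mem_nhdsWithin).trans hφ.isBigO_zero,
    fun a ↦ (bound (eventually_gt_atTop 0)).trans (hφ.isBigO_atTop a)⟩

theorem exists_isBigO_zero (hφ : RapidlyDecaying φ) (h : 0 < c.re ∨ 0 ≤ c.re ∧ 0 < s.re) :
    ∃ b < s.re, (fun u : ℝ ↦ φ u * Complex.exp (-c / u)) =O[𝓝[>] 0] (· ^ (-b)) := by
  rcases h with hc | ⟨hc, hs⟩
  · exact ⟨s.re - 1, by linarith, by
      simpa using hφ.isBigO_zero.mul (isBigO_exp_neg_div_zero hc (s.re - 1))⟩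
  · exact ⟨0, hs, by simpa using (hφ.mul_exp_neg_div hc).isBigO_zero⟩

theorem mellinConvergent_twist (hφ : RapidlyDecaying φ)
    (h : 0 < c.re ∨ 0 ≤ c.re ∧ 0 < s.re) :
    MellinConvergent (fun u : ℝ ↦ φ u * Complex.exp (-c / u)) s := by
  obtain ⟨b, hb, h_bot⟩ := hφ.exists_isBigO_zero h
  have hf := hφ.mul_exp_neg_div (h.elim le_of_lt And.left)
  exact mellinConvergent_of_isBigO_rpow (hf.continuousOn.locallyIntegrableOn measurableSet_Ioi)
    (hf.isBigO_atTop (s.re + 1)) (lt_add_one _) h_bot hb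

theorem differentiableAt_twistedMellin (hφ : RapidlyDecaying φ)
    (h : 0 < c.re ∨ 0 ≤ c.re ∧ 0 < s.re) :
    DifferentiableAt ℂ (fun s ↦ twistedMellin φ s c) s := by
  obtain ⟨b, hb, h_bot⟩ := hφ.exists_isBigO_zero h
  have hf := hφ.mul_exp_neg_div (h.elim le_of_lt And.left)
  exact mellin_differentiableAt_of_isBigO_rpow
    (hf.continuousOn.locallyIntegrableOn measurableSet_Ioi)
    (hf.isBigO_atTop (s.re + 1)) (lt_add_one _) h_bot hb

theorem aestronglyMeasurable_twist (hφ : RapidlyDecaying φ) (s c : ℂ) :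
    AEStronglyMeasurable (fun u : ℝ ↦ (u : ℂ) ^ (s - 1) • (φ u * Complex.exp (-c / u)))
      (volume.restrict (Ioi 0)) := by
  refine ContinuousOn.aestronglyMeasurable (.fun_smul ?_
    (hφ.continuousOn.mul (continuousOn_exp_neg_div c))) measurableSet_Ioi
  exact fun u hu ↦ (Complex.continuousAt_ofReal_cpow_const u _
    (Or.inr (ne_of_gt hu))).continuousWithinAt

theorem hasDerivAt_twistedMellin (hφ : RapidlyDecaying φ) (s : ℂ) (hc : 0 < c.re) :
    HasDerivAt (twistedMellin φ s) (-twistedMellin φ (s - 1) c) c := by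
  have hconv := hφ.mellinConvergent_twist (s := s - 1) (c := (c.re / 2 : ℝ))
    (Or.inl (by simpa using hc))
  have hderiv := (hasDerivAt_integral_of_dominated_loc_of_deriv_le (𝕜 := ℂ)
    (μ := volume.restrict (Ioi (0 : ℝ))) (s := {z : ℂ | c.re / 2 < z.re})
    (F := fun z u ↦ (u : ℂ) ^ (s - 1) • (φ u * Complex.exp (-z / u)))
    (F' := fun z u ↦ -((u : ℂ) ^ (s - 1 - 1) • (φ u * Complex.exp (-z / u))))
    ((isOpen_lt continuous_const Complex.continuous_re).mem_nhds (half_lt_self hc))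
    (.of_forall (hφ.aestronglyMeasurable_twist s)) (hφ.mellinConvergent_twist (Or.inl hc))
    (hφ.aestronglyMeasurable_twist (s - 1) c).neg ?_ hconv.norm ?_).2
  · exact hderiv.congr_deriv (integral_neg _)
  · filter_upwards [ae_restrict_mem measurableSet_Ioi] with u (hu : 0 < u) z hz
    simp only [norm_neg, norm_smul, norm_mul, norm_exp_neg_div, Complex.ofReal_re]
    gcongr
  · filter_upwards [ae_restrict_mem measurableSet_Ioi] with u (hu : 0 < u) z _
    have hu' : (u : ℂ) ≠ 0 := Complex.ofReal_ne_zero.2 hu.ne'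
    refine ((((hasDerivAt_id z).neg.div_const (u : ℂ)).cexp.const_mul (φ u)).const_mul
      ((u : ℂ) ^ (s - 1))).congr_deriv ?_
    rw [Complex.cpow_sub (s - 1) 1 hu', Complex.cpow_one]
    simp only [Pi.neg_apply, id, smul_eq_mul]
    ring

theorem continuousOn_twistedMellin (hφ : RapidlyDecaying φ) (hs : 0 < s.re) :
    ContinuousOn (twistedMellin φ s) {c | 0 ≤ c.re} := by
  have hconv := hφ.mellinConvergent_twist (c := 0) (s := s) (Or.inr ⟨le_rfl, hs⟩)
  refine continuousOn_of_dominated (fun c _ ↦ hφ.aestronglyMeasurable_twist s c) (fun c hc ↦ ?_)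
    hconv.norm ?_
  · filter_upwards [ae_restrict_mem measurableSet_Ioi] with u (hu : 0 < u)
    simp only [norm_smul, norm_mul]
    gcongr
    simpa using norm_exp_neg_div_le_one hc hu
  · exact .of_forall fun u ↦ by fun_prop

theorem mul_twistedMellin (hφ : RapidlyDecaying φ) (hψ : RapidlyDecaying ψ)
    (hderiv : ∀ u ∈ Ioi (0 : ℝ), HasDerivAt φ (ψ u) u) (h : 0 < c.re ∨ 0 ≤ c.re ∧ 0 < s.re) :
    c * twistedMellin φ s c =
      -(s + 1) * twistedMellin φ (s + 1) c - twistedMellin ψ (s + 2) c := by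
  set e : ℝ → ℂ := fun u ↦ Complex.exp (-c / u)
  have hsucc {t : ℂ} (ht : s.re ≤ t.re) : 0 < c.re ∨ 0 ≤ c.re ∧ 0 < t.re :=
    h.imp_right fun h ↦ ⟨h.1, h.2.trans_le ht⟩
  have he (u : ℝ) (hu : u ∈ Ioi (0 : ℝ)) : HasDerivAt e (e u * (c / (u : ℂ) ^ 2)) u := by
    have hu' : (u : ℂ) ≠ 0 := Complex.ofReal_ne_zero.2 (ne_of_gt hu)
    have := ((hasDerivAt_inv hu').const_mul (-c)).cexp.comp_ofReal
    exact this.congr_deriv (by simp only [e]; ring_nf)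
  have hprod (u : ℝ) (hu : u ∈ Ioi (0 : ℝ)) : HasDerivAt (fun u ↦ φ u * e u)
      (ψ u * e u + c • ((u : ℂ) ^ (-2 : ℂ) • (φ u * e u))) u := by
    refine ((hderiv u hu).mul (he u hu)).congr_deriv ?_
    rw [Complex.cpow_neg, show (2 : ℂ) = (2 : ℕ) by simp, Complex.cpow_natCast, smul_eq_mul,
      smul_eq_mul]
    ring
  have hψe : MellinConvergent (fun u ↦ ψ u * e u) (s + 1 + 1) :=
    hψ.mellinConvergent_twist (hsucc (by simp; linarith))
  have hφe : MellinConvergent (fun u ↦ c • ((u : ℂ) ^ (-2 : ℂ) • (φ u * e u))) (s + 1 + 1) := by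
    refine (MellinConvergent.cpow_smul.2 ?_).const_smul c
    simpa [add_assoc, one_add_one_eq_two] using hφ.mellinConvergent_twist h
  obtain ⟨b, hb, h_bot⟩ := hφ.exists_isBigO_zero (hsucc (t := s + 1) (by simp))
  have key := mellin_deriv_add_one hprod
    ((hφ.mul_exp_neg_div (h.elim le_of_lt And.left)).isBigO_atTop ((s + 1).re + 1))
    (lt_add_one _) h_bot hb (hasMellin_add hψe hφe).1
  rw [(hasMellin_add hψe hφe).2, mellin_const_smul, mellin_cpow_smul, smul_eq_mul,
    show s + 1 + 1 + -2 = s by ring, show s + 1 + 1 = s + 2 by ring] at key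
  exact eq_sub_of_add_eq' key

end RapidlyDecaying

/-! ### The power series solutions of Bessel's equation -/

/-- The sum of the power series with coefficients `a`; used only for `a` such that it converges
on the whole complex plane. -/
def powerSum (a : ℕ → ℂ) (w : ℂ) : ℂ := ∑' k, a k * w ^ k

section PowerSum

variable {a b : ℕ → ℂ}

theorem norm_mul_pow_le_of_mem_ball (a : ℕ → ℂ) {z : ℂ} {r : ℝ} (hz : z ∈ Metric.ball 0 r)
    (k : ℕ) : ‖a k * z ^ k‖ ≤ ‖a k * (r : ℂ) ^ k‖ := by
  rw [norm_mul, norm_mul, norm_pow, norm_pow, Complex.norm_real]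
  gcongr
  exact (mem_ball_zero_iff.1 hz).le.trans (le_abs_self r)

theorem hasSum_deriv_powerSum (ha : ∀ w, Summable fun k ↦ a k * w ^ k) (w : ℂ) :
    HasSum (fun k : ℕ ↦ (k + 1) * a (k + 1) * w ^ k) (deriv (powerSum a) w) := by
  have hsum := Complex.hasSum_deriv_of_summable_norm (U := Metric.ball (0 : ℂ) (‖w‖ + 1))
    (F := fun k w ↦ a k * w ^ k) (ha ((‖w‖ + 1 : ℝ) : ℂ)).norm (fun k ↦ by fun_prop)
    Metric.isOpen_ball (fun k z hz ↦ norm_mul_pow_le_of_mem_ball a hz k) (z := w) (by simp)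
  rw [← hasSum_nat_add_iff' 1] at hsum
  simpa [funext (powerSum.eq_1 a), Function.comp_def, mul_comm, mul_left_comm, mul_assoc] using hsum

theorem differentiable_powerSum (ha : ∀ w, Summable fun k ↦ a k * w ^ k) :
    Differentiable ℂ (powerSum a) := fun w ↦
  (Complex.differentiableOn_tsum_of_summable_norm (U := Metric.ball (0 : ℂ) (‖w‖ + 1))
    (F := fun k w ↦ a k * w ^ k) (ha ((‖w‖ + 1 : ℝ) : ℂ)).norm (fun k ↦ by fun_prop)
    Metric.isOpen_ball fun k _ hz ↦ norm_mul_pow_le_of_mem_ball a hz k).differentiableAt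
    (Metric.isOpen_ball.mem_nhds (by simp))

theorem hasDerivAt_mul_deriv_powerSum (ha : ∀ w, Summable fun k ↦ a k * w ^ k)
    (hab : ∀ k : ℕ, ((k : ℂ) + 1) ^ 2 * a (k + 1) = b k) (w : ℂ) :
    HasDerivAt (fun w ↦ w * deriv (powerSum a) w) (powerSum b w) w := by
  have hθ (w : ℂ) : HasSum (fun k : ℕ ↦ (k * a k) * w ^ k) (w * deriv (powerSum a) w) := by
    rw [← hasSum_nat_add_iff' 1]
    simpa [pow_succ, mul_comm, mul_left_comm, mul_assoc] using
      (hasSum_deriv_powerSum ha w).mul_left w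
  have hθ_eq : (fun w ↦ w * deriv (powerSum a) w) = powerSum fun k ↦ k * a k :=
    funext fun w ↦ (hθ w).tsum_eq.symm
  have hsum := hasSum_deriv_powerSum (fun w ↦ (hθ w).summable) w
  rw [hθ_eq]
  refine (differentiable_powerSum (fun w ↦ (hθ w).summable) w).hasDerivAt.congr_deriv ?_
  rw [← hsum.tsum_eq, powerSum]
  exact tsum_congr fun k ↦ by rw [← hab]; push_cast; ring

theorem powerSum_zero (a : ℕ → ℂ) : powerSum a 0 = a 0 := by
  rw [powerSum, tsum_eq_single 0 fun k hk ↦ by simp [hk], pow_zero, mul_one]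

theorem summable_mul_pow_of_norm_le_inv_factorial (h : ∀ k : ℕ, ‖a k‖ ≤ (k.factorial : ℝ)⁻¹)
    (w : ℂ) : Summable fun k ↦ a k * w ^ k := by
  refine .of_norm_bounded (Real.summable_pow_div_factorial ‖w‖) fun k ↦ ?_
  rw [norm_mul, norm_pow, mul_comm, div_eq_mul_inv]
  gcongr
  exact h k

end PowerSum

/-- The coefficients `1 / (k!)²`, so that `I₀(z) = ∑ (z² / 4) ^ k / (k!)²`. -/
def besselCoeff (k : ℕ) : ℂ := ((k.factorial : ℂ) ^ 2)⁻¹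

/-- The coefficients `H_k / (k!)²` of the logarithm-free part of `K₀` and `Y₀`. -/
def harmonicBesselCoeff (k : ℕ) : ℂ := Hk k * besselCoeff k

theorem Hk_nonneg (k : ℕ) : 0 ≤ Hk k := Finset.sum_nonneg fun _ _ ↦ by positivity

theorem Hk_le (k : ℕ) : Hk k ≤ k := by
  refine (Finset.sum_le_card_nsmul _ _ 1 fun j _ ↦ ?_).trans_eq (by simp)
  rw [div_le_one (by positivity)]
  linarith [j.cast_nonneg (α := ℝ)]

theorem norm_besselCoeff_le (k : ℕ) : ‖besselCoeff k‖ ≤ (k.factorial : ℝ)⁻¹ := by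
  have hk : (1 : ℝ) ≤ k.factorial := mod_cast k.factorial_pos
  rw [besselCoeff, norm_inv, norm_pow, Complex.norm_natCast]
  gcongr
  nlinarith

theorem norm_harmonicBesselCoeff_le (k : ℕ) :
    ‖harmonicBesselCoeff k‖ ≤ (k.factorial : ℝ)⁻¹ := by
  have hk : Hk k ≤ k.factorial := (Hk_le k).trans (mod_cast k.self_le_factorial)
  rw [harmonicBesselCoeff, besselCoeff, norm_mul, norm_inv, norm_pow, Complex.norm_natCast,
    Complex.norm_real, norm_of_nonneg (Hk_nonneg k), ← div_eq_mul_inv, div_le_iff₀ (by positivity)]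
  field_simp
  exact hk

/-- `∑ w ^ k / (k!)²`, the solution of `(w f')' = f` which is regular at `0`. -/
def besselSeries : ℂ → ℂ := powerSum besselCoeff

/-- `∑ H_k w ^ k / (k!)²`, a solution of `(w f')' = f + P'` where `P` is `besselSeries`. -/
def harmonicBesselSeries : ℂ → ℂ := powerSum harmonicBesselCoeff

theorem differentiable_besselSeries : Differentiable ℂ besselSeries :=
  differentiable_powerSum (summable_mul_pow_of_norm_le_inv_factorial norm_besselCoeff_le)

theorem differentiable_harmonicBesselSeries : Differentiable ℂ harmonicBesselSeries :=
  differentiable_powerSum (summable_mul_pow_of_norm_le_inv_factorial norm_harmonicBesselCoeff_le)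

theorem besselSeries_zero : besselSeries 0 = 1 := by
  simp [besselSeries, powerSum_zero, besselCoeff]

theorem harmonicBesselSeries_zero : harmonicBesselSeries 0 = 0 := by
  simp [harmonicBesselSeries, powerSum_zero, harmonicBesselCoeff, Hk]

theorem hasDerivAt_mul_deriv_besselSeries (w : ℂ) :
    HasDerivAt (fun w ↦ w * deriv besselSeries w) (besselSeries w) w :=
  hasDerivAt_mul_deriv_powerSum
    (summable_mul_pow_of_norm_le_inv_factorial norm_besselCoeff_le) (fun k ↦ by
      have hk : (k : ℂ) + 1 ≠ 0 := Nat.cast_add_one_ne_zero k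
      simp only [besselCoeff, Nat.factorial_succ]
      push_cast
      field_simp) w

theorem hasDerivAt_mul_deriv_harmonicBesselSeries (w : ℂ) :
    HasDerivAt (fun w ↦ w * deriv harmonicBesselSeries w)
      (harmonicBesselSeries w + deriv besselSeries w) w := by
  have hP := hasSum_deriv_powerSum
    (summable_mul_pow_of_norm_le_inv_factorial norm_besselCoeff_le) w
  have hQ := summable_mul_pow_of_norm_le_inv_factorial norm_harmonicBesselCoeff_le w
  refine (hasDerivAt_mul_deriv_powerSum
    (b := fun k ↦ harmonicBesselCoeff k + (k + 1) * besselCoeff (k + 1))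
    (summable_mul_pow_of_norm_le_inv_factorial norm_harmonicBesselCoeff_le) (fun k ↦ ?_)
    w).congr_deriv ?_
  · have hk : (k : ℂ) + 1 ≠ 0 := Nat.cast_add_one_ne_zero k
    have hH : (Hk (k + 1) : ℂ) = Hk k + 1 / (k + 1) := by
      simp [Hk, Finset.sum_range_succ]
    have hfac : (k.factorial : ℂ) ≠ 0 := mod_cast k.factorial_ne_zero
    simp only [harmonicBesselCoeff, besselCoeff, Nat.factorial_succ, hH]
    push_cast
    field_simp
  · rw [besselSeries, harmonicBesselSeries, ← hP.tsum_eq, powerSum, powerSum,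
      ← hQ.tsum_add hP.summable]
    exact tsum_congr fun k ↦ add_mul ..

/-! ### The Macdonald function -/

/-- The Macdonald integral `∫₀^∞ t^(s-1) exp (-(a t + b / t)) dt`, equal to
`2 (b / a)^(s/2) K_s(2 √(a b))`. -/
def macdonald (s a b : ℂ) : ℂ := twistedMellin (fun t : ℝ ↦ Complex.exp (-(a * t))) s b

/-- `-(L + 2 γ) P(w) + 2 Q(w)` with `P`, `Q` the two Bessel series; for `L = log w` this is
`2 K₀(2 √w)`. The logarithm is a separate argument because its branch varies. -/
def macdonaldSeries (L w : ℂ) : ℂ :=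
  -(L + 2 * eulerMascheroniConstant) * besselSeries w + 2 * harmonicBesselSeries w

section Macdonald

variable {s a b : ℂ}

theorem macdonald_neg (s a b : ℂ) : macdonald (-s) a b = macdonald s b a := by
  rw [macdonald, macdonald, twistedMellin, ← mellin_comp_inv, twistedMellin]
  congr 1 with t
  rw [mul_comm]
  congr 2 <;> push_cast <;> simp [div_eq_mul_inv]

theorem macdonald_mul_div (s a b : ℂ) {r : ℝ} (hr : 0 < r) :
    macdonald s (a * r) (b / r) = (r : ℂ) ^ (-s) * macdonald s a b := by
  rw [macdonald, macdonald, twistedMellin, twistedMellin, ← smul_eq_mul ((r : ℂ) ^ (-s)),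
    ← mellin_comp_mul_left _ _ hr]
  congr 1 with t
  push_cast
  congr 2 <;> ring

theorem hasDerivAt_macdonald (s : ℂ) (ha : 0 < a.re) (hb : 0 < b.re) :
    HasDerivAt (macdonald s a) (-macdonald (s - 1) a b) b :=
  (rapidlyDecaying_exp ha).hasDerivAt_twistedMellin s hb

theorem hasDerivAt_macdonald_left (ha : 0 < a.re) (h : 0 < b.re ∨ 0 ≤ b.re ∧ 0 < s.re) :
    HasDerivAt (fun a ↦ macdonald s a b) (-macdonald (s + 1) a b) a := by
  have hhalf := rapidlyDecaying_exp (a := (a.re / 2 : ℝ)) (by simpa using ha)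
  have hconv := hhalf.mellinConvergent_twist (s := s + 1) (c := b)
    (h.imp_right fun h ↦ ⟨h.1, by simp; linarith⟩)
  have hopen : IsOpen {z : ℂ | a.re / 2 < z.re} := isOpen_lt continuous_const Complex.continuous_re
  have hderiv := (hasDerivAt_integral_of_dominated_loc_of_deriv_le (𝕜 := ℂ)
    (μ := volume.restrict (Ioi (0 : ℝ))) (s := {z : ℂ | a.re / 2 < z.re})
    (F := fun z t ↦ (t : ℂ) ^ (s - 1) • (Complex.exp (-(z * t)) * Complex.exp (-b / t)))
    (F' := fun z t ↦ -((t : ℂ) ^ (s + 1 - 1) • (Complex.exp (-(z * t)) * Complex.exp (-b / t))))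
    (hopen.mem_nhds (half_lt_self ha))
    (hopen.eventually_mem (half_lt_self ha) |>.mono fun z hz ↦
      (rapidlyDecaying_exp ((half_pos ha).trans hz)).aestronglyMeasurable_twist s b)
    ((rapidlyDecaying_exp ha).mellinConvergent_twist h)
    ((rapidlyDecaying_exp ha).aestronglyMeasurable_twist (s + 1) b).neg ?_ hconv.norm ?_).2
  · exact hderiv.congr_deriv (integral_neg _)
  · filter_upwards [ae_restrict_mem measurableSet_Ioi] with t (ht : 0 < t) z (hz : a.re / 2 < z.re)
    simp only [norm_neg, norm_smul, norm_mul, Complex.norm_exp (-(_ * _)), Complex.neg_re,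
      Complex.re_mul_ofReal, Complex.ofReal_re]
    gcongr
  · filter_upwards [ae_restrict_mem measurableSet_Ioi] with t (ht : 0 < t) z _
    have ht' : (t : ℂ) ≠ 0 := Complex.ofReal_ne_zero.2 ht.ne'
    refine (((((hasDerivAt_id z).mul_const (t : ℂ)).fun_neg.cexp).mul_const
      (Complex.exp (-b / t))).const_mul ((t : ℂ) ^ (s - 1))).congr_deriv ?_
    rw [show s + 1 - 1 = s - 1 + 1 by ring, Complex.cpow_add _ _ ht', Complex.cpow_one]
    simp only [id, smul_eq_mul]
    ring

theorem mul_macdonald (hb : 0 < b.re) (s : ℂ) :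
    b * macdonald s 1 b = -(s + 1) * macdonald (s + 1) 1 b + macdonald (s + 2) 1 b := by
  have hexp : RapidlyDecaying fun t : ℝ ↦ Complex.exp (-(1 * t)) := rapidlyDecaying_exp (by simp)
  have hneg : RapidlyDecaying fun t : ℝ ↦ -Complex.exp (-(1 * t)) :=
    ⟨hexp.continuousOn.neg, hexp.isBigO_zero.neg_left, fun r ↦ (hexp.isBigO_atTop r).neg_left⟩
  have hderiv (t : ℝ) : HasDerivAt (fun t : ℝ ↦ Complex.exp (-(1 * t)))
      (-Complex.exp (-(1 * t))) t := by
    simpa using ((hasDerivAt_id (t : ℂ)).neg.cexp).comp_ofReal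
  have := hexp.mul_twistedMellin (s := s) hneg (fun t _ ↦ hderiv t) (Or.inl hb)
  have hneg_eq : twistedMellin (fun t : ℝ ↦ -Complex.exp (-(1 * t))) (s + 2) b =
      -macdonald (s + 2) 1 b := by
    simp only [macdonald, twistedMellin, mellin, neg_mul, smul_neg, integral_neg]
  rw [macdonald, this, hneg_eq, sub_neg_eq_add]
  rfl

theorem macdonald_recurrence {b : ℝ} (hb : 0 < b) (s : ℂ) :
    s * macdonald s 1 b = macdonald (1 + s) 1 b - (b : ℂ) ^ s * macdonald (1 - s) 1 b := by
  have hb' : (b : ℂ) ≠ 0 := Complex.ofReal_ne_zero.2 hb.ne'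
  have hrefl : (b : ℂ) * macdonald (s - 1) 1 b = (b : ℂ) ^ s * macdonald (1 - s) 1 b := by
    have hscale := macdonald_mul_div (1 - s) 1 b hb
    rw [one_mul, div_self hb', ← macdonald_neg, neg_sub, Complex.cpow_sub _ _ hb',
      Complex.cpow_one] at hscale
    rw [hscale]
    field_simp
  have hrec := mul_macdonald (b := b) (by simpa using hb) (s - 1)
  rw [hrefl, show s - 1 + 1 = s by ring, show s - 1 + 2 = 1 + s by ring] at hrec
  linear_combination hrec

theorem one_sub_exp_neg_le_sqrt {x : ℝ} (hx : 0 ≤ x) : 1 - rexp (-x) ≤ √x := by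
  rcases le_or_gt x 1 with h | h
  · have : x ≤ √x := Real.le_sqrt_of_sq_le (by nlinarith)
    linarith [one_sub_le_exp_neg x]
  · linarith [exp_pos (-x), Real.one_le_sqrt.2 h.le]

theorem norm_exp_neg_div_sub_one_le {b t : ℝ} (hb : 0 ≤ b) (ht : 0 < t) :
    ‖Complex.exp (-(b : ℂ) / t) - 1‖ ≤ √b / √t := by
  have hexp_le : rexp (-b / t) ≤ 1 := by simpa [neg_div] using div_nonneg hb ht.le
  have hsqrt := one_sub_exp_neg_le_sqrt (div_nonneg hb ht.le)
  rw [← neg_div, sqrt_div hb] at hsqrt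
  rw [norm_sub_rev]
  norm_cast
  rwa [norm_of_nonneg (sub_nonneg.2 hexp_le)]

theorem macdonald_one_zero (hs : 0 < s.re) : macdonald s 1 0 = Complex.Gamma s := by
  simp [Complex.Gamma_eq_integral hs, Complex.GammaIntegral_eq_mellin, macdonald, twistedMellin]

theorem norm_macdonald_sub_Gamma_le {b : ℝ} (hb : 0 ≤ b) (hs : 1 / 2 < s.re) :
    ‖macdonald s 1 b - Complex.Gamma s‖ ≤ √b * Real.Gamma (s.re - 1 / 2) := by
  have hs' : 0 < s.re := by linarith
  have hexp : RapidlyDecaying fun t : ℝ ↦ Complex.exp (-(1 * t)) := rapidlyDecaying_exp (by simp)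
  have hconv {b : ℝ} (hb : 0 ≤ b) := hexp.mellinConvergent_twist (c := b) (s := s)
    (Or.inr ⟨by simpa using hb, hs'⟩)
  rw [← macdonald_one_zero hs', Real.Gamma_eq_integral (by linarith), ← integral_const_mul,
    macdonald, macdonald, twistedMellin, twistedMellin, mellin, mellin, ← Complex.ofReal_zero,
    ← integral_sub (hconv hb) (hconv le_rfl)]
  refine norm_integral_le_of_norm_le
    ((Real.GammaIntegral_convergent (by linarith)).const_mul _) ?_
  filter_upwards [ae_restrict_mem measurableSet_Ioi] with t (ht : 0 < t)
  have hpow : t ^ (s.re - 1 / 2 - 1) = t ^ (s.re - 1) / √t := by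
    rw [sqrt_eq_rpow, ← rpow_sub ht]
    ring_nf
  simp only [Complex.ofReal_zero, neg_zero, zero_div, Complex.exp_zero, ← smul_sub, ← mul_sub]
  rw [norm_smul, norm_mul, Complex.norm_cpow_eq_rpow_re_of_pos ht, Complex.norm_exp, hpow,
    Complex.sub_re, Complex.one_re]
  calc t ^ (s.re - 1) * (rexp (-(1 * t : ℂ)).re * ‖Complex.exp (-(b : ℂ) / t) - 1‖)
      ≤ t ^ (s.re - 1) * (rexp (-t) * (√b / √t)) := by
        gcongr
        · simp
        · exact norm_exp_neg_div_sub_one_le hb ht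
    _ = √b * (rexp (-t) * (t ^ (s.re - 1) / √t)) := by ring

theorem tendstoLocallyUniformlyOn_macdonald :
    TendstoLocallyUniformlyOn (fun (b : ℝ) s ↦ macdonald s 1 b) Complex.Gamma (𝓝[>] 0)
      {s | 1 / 2 < s.re} := by
  have hopen : IsOpen {s : ℂ | 1 / 2 < s.re} := isOpen_lt continuous_const Complex.continuous_re
  rw [Metric.tendstoLocallyUniformlyOn_iff]
  intro ε hε s (hs : 1 / 2 < s.re)
  have hΓ : ContinuousAt Real.Gamma (s.re - 1 / 2) :=
    (Real.differentiableOn_Gamma_Ioi.differentiableAt (Ioi_mem_nhds (by linarith))).continuousAt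
  have hcont : ContinuousAt (fun z : ℂ ↦ Real.Gamma (z.re - 1 / 2)) s :=
    hΓ.comp (f := fun z : ℂ ↦ z.re - 1 / 2) (by fun_prop)
  have hlim : Tendsto (fun b ↦ √b * (Real.Gamma (s.re - 1 / 2) + 1)) (𝓝[>] 0) (𝓝 0) :=
    ((continuous_sqrt.mul continuous_const).tendsto' 0 0 (by simp)).mono_left nhdsWithin_le_nhds
  refine ⟨_, mem_nhdsWithin_of_mem_nhds
    ((hcont.eventually_lt_const (lt_add_one _)).and (hopen.mem_nhds hs)), ?_⟩
  filter_upwards [hlim.eventually_lt_const hε, self_mem_nhdsWithin] with b hbε hb z ⟨hz, hz'⟩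
  rw [dist_comm, dist_eq_norm]
  refine (norm_macdonald_sub_Gamma_le (le_of_lt hb) hz').trans_lt (hbε.trans_le' ?_)
  gcongr

theorem tendsto_deriv_macdonald : Tendsto (fun b : ℝ ↦ deriv (fun s ↦ macdonald s 1 b) 1)
    (𝓝[>] 0) (𝓝 (-eulerMascheroniConstant)) := by
  have hopen : IsOpen {s : ℂ | 1 / 2 < s.re} := isOpen_lt continuous_const Complex.continuous_re
  have hdiff : ∀ᶠ b : ℝ in 𝓝[>] 0,
      DifferentiableOn ℂ (fun s ↦ macdonald s 1 b) {s | 1 / 2 < s.re} := by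
    filter_upwards [self_mem_nhdsWithin] with b hb s _
    exact ((rapidlyDecaying_exp (by simp)).differentiableAt_twistedMellin
      (Or.inl (by simpa using hb))).differentiableWithinAt
  have hderiv := (tendstoLocallyUniformlyOn_macdonald.deriv hdiff hopen).tendsto_at
    (show (1 : ℂ) ∈ {s : ℂ | 1 / 2 < s.re} by norm_num)
  simpa only [Complex.hasDerivAt_Gamma_one.deriv, Function.comp_apply] using hderiv

theorem macdonald_zero_eq {b : ℝ} (hb : 0 < b) :
    macdonald 0 1 b = 2 * deriv (fun s ↦ macdonald s 1 b) 1 - log b * macdonald 1 1 b := by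
  have hb' : (b : ℂ) ≠ 0 := Complex.ofReal_ne_zero.2 hb.ne'
  have hdiff (s : ℂ) : DifferentiableAt ℂ (fun s ↦ macdonald s 1 b) s :=
    (rapidlyDecaying_exp (by simp)).differentiableAt_twistedMellin (Or.inl (by simpa using hb))
  have hleft : HasDerivAt (fun s ↦ s * macdonald s 1 b) (macdonald 0 1 b) 0 := by
    simpa using (hasDerivAt_id' (0 : ℂ)).fun_mul (hdiff 0).hasDerivAt
  have hadd := (hdiff (1 + 0)).hasDerivAt.comp_const_add 1 0
  have hsub := (hdiff (1 - 0)).hasDerivAt.comp_const_sub 1 0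
  have hpow : HasDerivAt (fun s : ℂ ↦ (b : ℂ) ^ s) (log b) 0 := by
    simpa [Complex.ofReal_log hb.le] using (hasDerivAt_id (0 : ℂ)).const_cpow (Or.inl hb')
  have hright := hadd.sub (hpow.mul hsub)
  rw [funext (macdonald_recurrence hb)] at hleft
  have := hleft.unique hright
  simp only [add_zero, sub_zero, Complex.cpow_zero] at this
  linear_combination this

theorem besselSeries_ofReal_ne_zero {x : ℝ} (hx : 0 ≤ x) : besselSeries x ≠ 0 := by
  have hsum : Summable fun k : ℕ ↦ ((k.factorial : ℝ) ^ 2)⁻¹ * x ^ k := by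
    rw [← Complex.summable_ofReal]
    simpa [besselCoeff] using
      summable_mul_pow_of_norm_le_inv_factorial norm_besselCoeff_le (x : ℂ)
  have hpos : 0 < ∑' k : ℕ, ((k.factorial : ℝ) ^ 2)⁻¹ * x ^ k :=
    hsum.tsum_pos (fun k ↦ by positivity) 0 (by simp)
  have heq : besselSeries x = ((∑' k : ℕ, ((k.factorial : ℝ) ^ 2)⁻¹ * x ^ k : ℝ) : ℂ) := by
    rw [Complex.ofReal_tsum]
    simp [besselSeries, powerSum, besselCoeff]
  rw [heq]
  exact Complex.ofReal_ne_zero.2 hpos.ne'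

theorem eqOn_zero_of_hasDerivAt_zero_of_tendsto {f : ℝ → ℂ} (hf : ∀ x > 0, HasDerivAt f 0 x)
    (h0 : Tendsto f (𝓝[>] 0) (𝓝 0)) : EqOn f 0 (Ioi 0) := by
  intro x hx
  have hconst (y : ℝ) (hy : y ∈ Ioi (0 : ℝ)) : f x = f y :=
    isOpen_Ioi.is_const_of_deriv_eq_zero isPreconnected_Ioi
      (fun z hz ↦ (hf z hz).differentiableAt.differentiableWithinAt)
      (fun z hz ↦ (hf z hz).deriv) hx hy
  exact tendsto_nhds_unique
    (tendsto_const_nhds.congr' (eventually_nhdsWithin_of_forall hconst)) h0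

-- The Wronskian of `u` with the regular solution is constant, so it vanishes; hence the quotient
-- of `u` by the regular solution is constant as well.
theorem eqOn_zero_of_bessel_system {u v : ℝ → ℂ} (hu : ∀ x > 0, HasDerivAt u (-(v x / x)) x)
    (hv : ∀ x > 0, HasDerivAt v (-u x) x) (hu0 : Tendsto u (𝓝[>] 0) (𝓝 0))
    (hv0 : Tendsto v (𝓝[>] 0) (𝓝 0)) : EqOn u 0 (Ioi 0) := by
  have hP (x : ℝ) : HasDerivAt (fun x : ℝ ↦ besselSeries x) (deriv besselSeries x) x :=
    (differentiable_besselSeries x).hasDerivAt.comp_ofReal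
  have hθP (x : ℝ) := (hasDerivAt_mul_deriv_besselSeries x).comp_ofReal
  have hP0 : Tendsto (fun x : ℝ ↦ besselSeries x) (𝓝[>] 0) (𝓝 1) := by
    simpa [besselSeries_zero] using (hP 0).continuousAt.tendsto.mono_left nhdsWithin_le_nhds
  have hθP0 : Tendsto (fun x : ℝ ↦ x * deriv besselSeries x) (𝓝[>] 0) (𝓝 0) := by
    simpa using (hθP 0).continuousAt.tendsto.mono_left nhdsWithin_le_nhds
  have hwronskian : EqOn (fun x : ℝ ↦ u x * (x * deriv besselSeries x) + v x * besselSeries x) 0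
      (Ioi 0) := by
    refine eqOn_zero_of_hasDerivAt_zero_of_tendsto (fun x hx ↦ ?_)
      (by simpa using (hu0.mul hθP0).add (hv0.mul hP0))
    refine (((hu x hx).fun_mul (hθP x)).fun_add ((hv x hx).fun_mul (hP x))).congr_deriv ?_
    have hx' : (x : ℂ) ≠ 0 := Complex.ofReal_ne_zero.2 hx.ne'
    field_simp
    ring
  have hquot : EqOn (fun x : ℝ ↦ u x / besselSeries x) 0 (Ioi 0) := by
    refine eqOn_zero_of_hasDerivAt_zero_of_tendsto (fun x hx ↦ ?_)
      (by simpa using! hu0.div hP0 one_ne_zero)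
    refine ((hu x hx).fun_div (hP x) (besselSeries_ofReal_ne_zero hx.le)).congr_deriv ?_
    have hx' : (x : ℂ) ≠ 0 := Complex.ofReal_ne_zero.2 hx.ne'
    have hW : u x * (x * deriv besselSeries x) + v x * besselSeries x = 0 := hwronskian hx
    rw [div_eq_zero_iff]
    left
    field_simp
    linear_combination -hW
  exact fun x hx ↦
    (div_eq_zero_iff.1 (hquot hx)).resolve_right (besselSeries_ofReal_ne_zero (le_of_lt hx))

theorem tendsto_log_mul_of_isBigO_sqrt {f : ℝ → ℂ} (hf : f =O[𝓝[>] 0] (√·)) :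
    Tendsto (fun x : ℝ ↦ Complex.log x * f x) (𝓝[>] 0) (𝓝 0) := by
  have hlog : (fun x : ℝ ↦ Complex.log x) =O[𝓝[>] 0] log :=
    IsBigO.of_bound 1 <| eventually_nhdsWithin_of_forall fun x (hx : 0 < x) ↦ by
      rw [← Complex.ofReal_log hx.le, Complex.norm_real, one_mul]
  refine (hlog.mul hf).trans_tendsto ?_
  simpa only [sqrt_eq_rpow] using tendsto_log_mul_rpow_nhdsGT_zero one_half_pos

theorem isBigO_sqrt_of_differentiableAt {f : ℂ → ℂ} (hf : DifferentiableAt ℂ f 0) :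
    (fun x : ℝ ↦ f x - f 0) =O[𝓝[>] 0] (√·) := by
  have hlin : (fun x : ℝ ↦ f x - f 0) =O[𝓝[>] 0] fun x ↦ x := by
    simpa using (hf.hasDerivAt.comp_ofReal (z := 0)).isBigO_sub.mono nhdsWithin_le_nhds
  refine hlin.trans (IsBigO.of_bound 1 ?_)
  filter_upwards [Ioo_mem_nhdsGT one_pos] with x hx
  rw [one_mul, norm_of_nonneg hx.1.le, norm_of_nonneg (sqrt_nonneg x)]
  exact Real.le_sqrt_of_sq_le (by nlinarith [hx.1, hx.2])

theorem tendsto_of_isBigO_sqrt {f : ℝ → ℂ} (hf : f =O[𝓝[>] 0] (√·)) :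
    Tendsto f (𝓝[>] 0) (𝓝 0) :=
  hf.trans_tendsto ((continuous_sqrt.tendsto' 0 0 sqrt_zero).mono_left nhdsWithin_le_nhds)

theorem isBigO_macdonald_one_sub_one :
    (fun x : ℝ ↦ macdonald 1 1 x - 1) =O[𝓝[>] 0] (√·) :=
  IsBigO.of_bound (Real.Gamma (1 - 1 / 2)) <| eventually_nhdsWithin_of_forall fun x hx ↦ by
    simpa [mul_comm, abs_of_nonneg (sqrt_nonneg x)] using
      norm_macdonald_sub_Gamma_le (s := 1) (le_of_lt hx) (by norm_num)

theorem tendsto_macdonald_sub_macdonaldSeries :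
    Tendsto (fun x : ℝ ↦ macdonald 0 1 x - macdonaldSeries (Complex.log x) x) (𝓝[>] 0) (𝓝 0) := by
  have hP := isBigO_sqrt_of_differentiableAt (differentiable_besselSeries 0)
  have hQ := tendsto_of_isBigO_sqrt
    (isBigO_sqrt_of_differentiableAt (differentiable_harmonicBesselSeries 0))
  rw [besselSeries_zero] at hP
  rw [harmonicBesselSeries_zero] at hQ
  have hlim := (((tendsto_deriv_macdonald.add_const (eulerMascheroniConstant : ℂ)).const_mul 2).sub
    (tendsto_log_mul_of_isBigO_sqrt (isBigO_macdonald_one_sub_one.sub hP))).add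
    (((tendsto_of_isBigO_sqrt hP).const_mul (2 * eulerMascheroniConstant : ℂ)).sub
      (hQ.const_mul 2))
  simp only [neg_add_cancel, mul_zero, sub_zero, add_zero] at hlim
  refine hlim.congr' (eventually_nhdsWithin_of_forall fun x (hx : 0 < x) ↦ ?_)
  simp only [macdonald_zero_eq hx, macdonaldSeries, Complex.ofReal_log hx.le]
  ring

/-- `-w d/dw` of `macdonaldSeries (log w) w`. -/
def macdonaldSeriesDeriv (w : ℂ) : ℂ :=
  besselSeries w + (Complex.log w + 2 * eulerMascheroniConstant) * (w * deriv besselSeries w)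
    - 2 * (w * deriv harmonicBesselSeries w)

theorem hasDerivAt_macdonaldSeries_log {w : ℂ} (hw : w ∈ Complex.slitPlane) :
    HasDerivAt (fun w ↦ macdonaldSeries (Complex.log w) w) (-(macdonaldSeriesDeriv w / w)) w := by
  have hw0 : w ≠ 0 := Complex.slitPlane_ne_zero hw
  have hL := (Complex.hasDerivAt_log hw).add_const (2 * eulerMascheroniConstant : ℂ)
  refine ((hL.fun_neg.fun_mul (differentiable_besselSeries w).hasDerivAt).fun_add
    ((differentiable_harmonicBesselSeries w).hasDerivAt.const_mul 2)).congr_deriv ?_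
  rw [macdonaldSeriesDeriv]
  field_simp
  ring

theorem hasDerivAt_macdonaldSeriesDeriv {w : ℂ} (hw : w ∈ Complex.slitPlane) :
    HasDerivAt macdonaldSeriesDeriv (-macdonaldSeries (Complex.log w) w) w := by
  have hw0 : w ≠ 0 := Complex.slitPlane_ne_zero hw
  have hL := (Complex.hasDerivAt_log hw).add_const (2 * eulerMascheroniConstant : ℂ)
  refine (((differentiable_besselSeries w).hasDerivAt.fun_add
    (hL.fun_mul (hasDerivAt_mul_deriv_besselSeries w))).fun_sub
    ((hasDerivAt_mul_deriv_harmonicBesselSeries w).const_mul 2)).congr_deriv ?_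
  rw [macdonaldSeries]
  field_simp
  ring

theorem tendsto_macdonald_sub_macdonaldSeriesDeriv :
    Tendsto (fun x : ℝ ↦ macdonald 1 1 x - macdonaldSeriesDeriv x) (𝓝[>] 0) (𝓝 0) := by
  have hP := isBigO_sqrt_of_differentiableAt (differentiable_besselSeries 0)
  have hθP := isBigO_sqrt_of_differentiableAt (hasDerivAt_mul_deriv_besselSeries 0).differentiableAt
  have hθQ := isBigO_sqrt_of_differentiableAt
    (hasDerivAt_mul_deriv_harmonicBesselSeries 0).differentiableAt
  rw [besselSeries_zero] at hP
  simp only [zero_mul, sub_zero] at hθP hθQ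
  have hlim := ((tendsto_of_isBigO_sqrt (isBigO_macdonald_one_sub_one.sub hP)).sub
    (tendsto_log_mul_of_isBigO_sqrt hθP)).add
    ((tendsto_of_isBigO_sqrt hθQ).const_mul 2 |>.sub
      ((tendsto_of_isBigO_sqrt hθP).const_mul (2 * eulerMascheroniConstant : ℂ)))
  simp only [mul_zero, sub_zero, add_zero] at hlim
  refine hlim.congr fun x ↦ ?_
  rw [macdonaldSeriesDeriv]
  ring

theorem macdonald_zero_one_ofReal {x : ℝ} (hx : 0 < x) :
    macdonald 0 1 x = macdonaldSeries (Complex.log x) x := by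
  have hmem {x : ℝ} (hx : 0 < x) : (x : ℂ) ∈ Complex.slitPlane := Complex.ofReal_mem_slitPlane.2 hx
  have hderiv {x : ℝ} (hx : 0 < x) (s : ℂ) : HasDerivAt (fun x : ℝ ↦ macdonald s 1 x)
      (-macdonald (s - 1) 1 x) x :=
    (hasDerivAt_macdonald s (by simp) (by simpa using hx)).comp_ofReal
  have hneg_one {x : ℝ} (hx : 0 < x) : macdonald (0 - 1) 1 x = macdonald 1 1 x / x := by
    have hrec := mul_macdonald (b := x) (by simpa using hx) (-1)
    rw [eq_div_iff (Complex.ofReal_ne_zero.2 hx.ne'), mul_comm, zero_sub, hrec]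
    norm_num
  refine sub_eq_zero.1 (eqOn_zero_of_bessel_system
    (u := fun x : ℝ ↦ macdonald 0 1 x - macdonaldSeries (Complex.log x) x)
    (v := fun x : ℝ ↦ macdonald 1 1 x - macdonaldSeriesDeriv x) (fun x hx ↦ ?_) (fun x hx ↦ ?_)
    tendsto_macdonald_sub_macdonaldSeries tendsto_macdonald_sub_macdonaldSeriesDeriv hx)
  · refine ((hderiv hx 0).sub
      (hasDerivAt_macdonaldSeries_log (hmem hx)).comp_ofReal).congr_deriv ?_
    rw [hneg_one hx]
    ring
  · refine ((hderiv hx 1).sub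
      (hasDerivAt_macdonaldSeriesDeriv (hmem hx)).comp_ofReal).congr_deriv ?_
    rw [sub_self]
    ring

theorem eqOn_re_pos_of_eventually_eq_ofReal {f g : ℂ → ℂ}
    (hf : DifferentiableOn ℂ f {z | 0 < z.re}) (hg : DifferentiableOn ℂ g {z | 0 < z.re})
    (h : ∀ᶠ x : ℝ in atTop, f x = g x) : EqOn f g {z | 0 < z.re} := by
  have hopen : IsOpen {z : ℂ | 0 < z.re} := isOpen_lt continuous_const Complex.continuous_re
  obtain ⟨x₀, hx₀⟩ := eventually_atTop.1 (h.and (eventually_gt_atTop 0))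
  have htend : Tendsto ((↑) : ℝ → ℂ) (𝓝[>] x₀) (𝓝[≠] x₀) :=
    tendsto_nhdsWithin_iff.2 ⟨(Complex.continuous_ofReal.tendsto x₀).mono_left
      nhdsWithin_le_nhds, eventually_nhdsWithin_of_forall fun x hx ↦ by simpa using ne_of_gt hx⟩
  refine (hf.analyticOnNhd hopen).eqOn_of_preconnected_of_frequently_eq (hg.analyticOnNhd hopen)
    (convex_halfSpace_re_gt 0).isPreconnected (z₀ := (x₀ : ℂ)) (by simpa using (hx₀ x₀ le_rfl).2)
    (htend.frequently ?_)
  have hev : ∀ᶠ x : ℝ in 𝓝[>] x₀, f x = g x :=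
    eventually_nhdsWithin_of_forall fun x hx ↦ (hx₀ x (le_of_lt hx)).1
  exact hev.frequently

theorem macdonald_zero_right (ha : 0 < a.re) (hs : 0 < s.re) :
    macdonald s a 0 = a ^ (-s) * Complex.Gamma s := by
  refine eqOn_re_pos_of_eventually_eq_ofReal (f := fun a ↦ macdonald s a 0)
    (g := fun a ↦ a ^ (-s) * Complex.Gamma s) (fun a ha ↦ ?_) (fun a ha ↦ ?_) ?_ ha
  · exact (hasDerivAt_macdonald_left ha
      (Or.inr ⟨le_rfl, hs⟩)).differentiableAt.differentiableWithinAt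
  · exact ((differentiableAt_id.cpow_const (Or.inl ha)).mul_const _).differentiableWithinAt
  · filter_upwards [eventually_gt_atTop 0] with x hx
    simpa [macdonald_one_zero hs] using macdonald_mul_div s 1 0 hx

theorem differentiableAt_macdonaldSeries {f g : ℂ → ℂ} {z : ℂ} (hf : DifferentiableAt ℂ f z)
    (hg : DifferentiableAt ℂ g z) :
    DifferentiableAt ℂ (fun z ↦ macdonaldSeries (f z) (g z)) z := by
  have hP := differentiable_besselSeries
  have hQ := differentiable_harmonicBesselSeries
  unfold macdonaldSeries
  fun_prop

theorem macdonald_zero_ofReal {x y : ℝ} (hx : 0 < x) (hy : 0 < y) :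
    macdonald 0 x y = macdonaldSeries (Complex.log x + Complex.log y) (x * y) := by
  have hscale := macdonald_mul_div 0 1 (x * y) hx
  rw [one_mul, mul_div_cancel_left₀ _ (by simpa using hx.ne'), neg_zero, Complex.cpow_zero,
    one_mul, ← Complex.ofReal_mul, macdonald_zero_one_ofReal (mul_pos hx hy),
    Complex.ofReal_mul, Complex.log_ofReal_mul hx (by simpa using hy.ne')] at hscale
  rw [hscale, Complex.ofReal_log hx.le]

theorem macdonald_zero (ha : 0 < a.re) (hb : 0 < b.re) :
    macdonald 0 a b = macdonaldSeries (Complex.log a + Complex.log b) (a * b) := by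
  have hlog {z : ℂ} (hz : 0 < z.re) : DifferentiableAt ℂ Complex.log z :=
    Complex.differentiableAt_log (Or.inl hz)
  have hreal {x : ℝ} (hx : 0 < x) : EqOn (macdonald 0 x)
      (fun b ↦ macdonaldSeries (Complex.log x + Complex.log b) (x * b)) {b | 0 < b.re} := by
    refine eqOn_re_pos_of_eventually_eq_ofReal (fun b hb ↦ ?_) (fun b hb ↦ ?_)
      ((eventually_gt_atTop 0).mono fun y hy ↦ macdonald_zero_ofReal hx hy)
    · exact (hasDerivAt_macdonald 0 (by simpa using hx) hb).differentiableAt.differentiableWithinAt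
    · exact (differentiableAt_macdonaldSeries ((hlog hb).const_add _)
        (by fun_prop)).differentiableWithinAt
  have hcomplex : EqOn (fun a ↦ macdonald 0 a b)
      (fun a ↦ macdonaldSeries (Complex.log a + Complex.log b) (a * b)) {a | 0 < a.re} := by
    refine eqOn_re_pos_of_eventually_eq_ofReal (fun a ha ↦ ?_) (fun a ha ↦ ?_)
      ((eventually_gt_atTop 0).mono fun x hx ↦ hreal hx hb)
    · exact (hasDerivAt_macdonald_left ha (Or.inl hb)).differentiableAt.differentiableWithinAt
    · exact (differentiableAt_macdonaldSeries ((hlog ha).add_const _)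
        (by fun_prop)).differentiableWithinAt
  exact hcomplex ha

end Macdonald

/-! ### Decay in the twisting parameter -/

theorem RapidlyDecaying.exists_norm_twistedMellin_le {φ : ℝ → ℂ} (hφ : RapidlyDecaying φ) {a b : ℝ}
    (ha : 0 < a) (hab : a ≤ b) :
    ∃ C, ∀ s c : ℂ, a ≤ s.re → s.re ≤ b → 0 ≤ c.re → ‖twistedMellin φ s c‖ ≤ C := by
  have hconv (r : ℝ) (hr : 0 < r) : IntegrableOn (fun u : ℝ ↦ u ^ (r - 1) * ‖φ u‖) (Ioi 0) := by
    have := (hφ.mellinConvergent_twist (c := 0) (s := r) (Or.inr ⟨le_rfl, by simpa⟩)).norm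
    refine IntegrableOn.congr_fun this (fun u (hu : 0 < u) ↦ ?_) measurableSet_Ioi
    simp [Complex.norm_cpow_eq_rpow_re_of_pos hu]
  refine ⟨∫ u in Ioi (0 : ℝ), (u ^ (a - 1) * ‖φ u‖ + u ^ (b - 1) * ‖φ u‖), fun s c hsa hsb hc ↦ ?_⟩
  refine norm_integral_le_of_norm_le ((hconv a ha).add (hconv b (ha.trans_le hab))) ?_
  filter_upwards [ae_restrict_mem measurableSet_Ioi] with u (hu : 0 < u)
  rw [norm_smul, norm_mul, Complex.norm_cpow_eq_rpow_re_of_pos hu, ← add_mul,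
    Complex.sub_re, Complex.one_re]
  have hpow : u ^ (s.re - 1) ≤ u ^ (a - 1) + u ^ (b - 1) := by
    have ha' : 0 ≤ u ^ (a - 1) := by positivity
    have hb' : 0 ≤ u ^ (b - 1) := by positivity
    rcases le_total u 1 with hu1 | hu1
    · exact (rpow_le_rpow_of_exponent_ge hu hu1 (by linarith)).trans (le_add_of_nonneg_right hb')
    · exact (rpow_le_rpow_of_exponent_le hu1 (by linarith)).trans (le_add_of_nonneg_left ha')
  gcongr
  exact mul_le_of_le_one_right (norm_nonneg _) (norm_exp_neg_div_le_one hc hu)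

section Schwartz

variable (H : 𝓢(ℝ, ℂ))

/-- The analytic continuation of `s ↦ twistedMellin H s c` to `-2 < re s`, for `c ≠ 0`, obtained
from two integrations by parts. It also exhibits the decay of `twistedMellin H s c` in `c`. -/
def twistedMellinExt (s c : ℂ) : ℂ :=
  ((s + 1) * (s + 2) * twistedMellin H (s + 2) c
    + (2 * s + 4) * twistedMellin (SchwartzMap.derivCLM ℂ ℂ H) (s + 3) c
    + twistedMellin (SchwartzMap.derivCLM ℂ ℂ (SchwartzMap.derivCLM ℂ ℂ H)) (s + 4) c) / c ^ 2

variable {s c : ℂ}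

theorem mul_twistedMellin_schwartz (h : 0 < c.re ∨ 0 ≤ c.re ∧ 0 < s.re) :
    c * twistedMellin H s c = -(s + 1) * twistedMellin H (s + 1) c
      - twistedMellin (SchwartzMap.derivCLM ℂ ℂ H) (s + 2) c :=
  (rapidlyDecaying_schwartz H).mul_twistedMellin (rapidlyDecaying_schwartz _)
    (fun u _ ↦ H.hasDerivAt u) h

theorem twistedMellin_eq_twistedMellinExt (hc : c ≠ 0) (h : 0 < c.re ∨ 0 ≤ c.re ∧ 0 < s.re) :
    twistedMellin H s c = twistedMellinExt H s c := by
  have hsucc {t : ℂ} (ht : s.re ≤ t.re) : 0 < c.re ∨ 0 ≤ c.re ∧ 0 < t.re :=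
    h.imp_right fun h ↦ ⟨h.1, h.2.trans_le ht⟩
  have h₀ := mul_twistedMellin_schwartz H h
  have h₁ := mul_twistedMellin_schwartz H (hsucc (t := s + 1) (by simp))
  have h₂ := mul_twistedMellin_schwartz (SchwartzMap.derivCLM ℂ ℂ H)
    (hsucc (t := s + 2) (by simp))
  rw [show s + 1 + 1 = s + 2 by ring, show s + 1 + 2 = s + 3 by ring] at h₁
  rw [show s + 2 + 1 = s + 3 by ring, show s + 2 + 2 = s + 4 by ring] at h₂
  rw [twistedMellinExt, eq_div_iff (pow_ne_zero 2 hc)]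
  linear_combination c * h₀ - (s + 1) * h₁ - h₂

theorem differentiableAt_twistedMellinExt (hc : 0 ≤ c.re) (hs : -2 < s.re) :
    DifferentiableAt ℂ (fun s ↦ twistedMellinExt H s c) s := by
  have hT (H : 𝓢(ℝ, ℂ)) {r : ℂ} (hr : 2 ≤ r.re) :
      DifferentiableAt ℂ (fun s ↦ twistedMellin H (s + r) c) s :=
    (differentiableAt_comp_add_const (f := (twistedMellin H · c))).2 <|
      (rapidlyDecaying_schwartz H).differentiableAt_twistedMellin
        (Or.inr ⟨hc, by rw [Complex.add_re]; linarith⟩)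
  have h₂ := hT H (r := 2) (by simp)
  have h₃ := hT (SchwartzMap.derivCLM ℂ ℂ H) (r := 3) (by norm_num)
  have h₄ := hT (SchwartzMap.derivCLM ℂ ℂ (SchwartzMap.derivCLM ℂ ℂ H)) (r := 4) (by norm_num)
  unfold twistedMellinExt
  fun_prop

theorem continuousOn_twistedMellinExt (hs : -2 < s.re) :
    ContinuousOn (twistedMellinExt H s) {c | 0 ≤ c.re ∧ c ≠ 0} := by
  have hT (H : 𝓢(ℝ, ℂ)) {r : ℂ} (hr : 2 ≤ r.re) :
      ContinuousOn (twistedMellin H (s + r)) {c | 0 ≤ c.re ∧ c ≠ 0} :=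
    ((rapidlyDecaying_schwartz H).continuousOn_twistedMellin
      (by rw [Complex.add_re]; linarith)).mono fun c hc ↦ hc.1
  have h₂ := hT H (r := 2) (by simp)
  have h₃ := hT (SchwartzMap.derivCLM ℂ ℂ H) (r := 3) (by norm_num)
  have h₄ := hT (SchwartzMap.derivCLM ℂ ℂ (SchwartzMap.derivCLM ℂ ℂ H)) (r := 4) (by norm_num)
  unfold twistedMellinExt
  exact ContinuousOn.div (by fun_prop) (by fun_prop) fun c hc ↦ pow_ne_zero 2 hc.2

theorem exists_norm_twistedMellinExt_le {R : ℝ} (hR : 0 ≤ R) : ∃ C, ∀ s c : ℂ, 0 ≤ s.re →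
    ‖s‖ ≤ R → 0 ≤ c.re → ‖twistedMellinExt H s c‖ ≤ C / ‖c‖ ^ 2 := by
  have hT (H : 𝓢(ℝ, ℂ)) : ∃ C, ∀ s c r : ℂ, 0 ≤ s.re → ‖s‖ ≤ R → 2 ≤ r.re → r.re ≤ 4 → 0 ≤ c.re →
      ‖twistedMellin H (s + r) c‖ ≤ C := by
    obtain ⟨C, hC⟩ := (rapidlyDecaying_schwartz H).exists_norm_twistedMellin_le two_pos
      (by linarith : 2 ≤ R + 4)
    refine ⟨C, fun s c r hs hsR hr hr' hc ↦ hC _ _ ?_ ?_ hc⟩ <;> rw [Complex.add_re]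
    · linarith
    · linarith [Complex.re_le_norm s]
  obtain ⟨C₂, hC₂⟩ := hT H
  obtain ⟨C₃, hC₃⟩ := hT (SchwartzMap.derivCLM ℂ ℂ H)
  obtain ⟨C₄, hC₄⟩ := hT (SchwartzMap.derivCLM ℂ ℂ (SchwartzMap.derivCLM ℂ ℂ H))
  refine ⟨(R + 1) * (R + 2) * C₂ + (2 * R + 4) * C₃ + C₄, fun s c hs hsR hc ↦ ?_⟩
  have hs₁ : ‖s + 1‖ ≤ R + 1 := (norm_add_le _ _).trans (by simpa using hsR)
  have hs₂ : ‖s + 2‖ ≤ R + 2 := (norm_add_le _ _).trans (by simpa using hsR)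
  have hs₄ : ‖2 * s + 4‖ ≤ 2 * R + 4 := (norm_add_le _ _).trans (by simpa using hsR)
  rw [twistedMellinExt, norm_div, norm_pow]
  gcongr
  refine norm_add₃_le.trans ?_
  simp only [norm_mul]
  gcongr
  · exact hC₂ s c 2 hs hsR (by simp) (by norm_num) hc
  · exact hC₃ s c 3 hs hsR (by norm_num) (by norm_num) hc
  · exact hC₄ s c 4 hs hsR (by norm_num) (by simp) hc

end Schwartz

/-! ### Poisson summation -/

theorem norm_e2pi (t : ℝ) : ‖e2pi t‖ = 1 := by
  simp [e2pi, Complex.norm_exp]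

theorem summable_int_of_norm_le_div_sq {E : Type*} [NormedAddCommGroup E] [CompleteSpace E]
    {f : ℤ → E} {C : ℝ} (h : ∀ n ≠ 0, ‖f n‖ ≤ C / n ^ 2) : Summable f := by
  refine summable_of_isBigO ((Real.summable_one_div_int_pow (p := 2)).2 one_lt_two)
    (IsBigO.of_bound C ?_)
  filter_upwards [eventually_cofinite_ne 0] with n hn
  simpa [div_eq_mul_inv] using h n hn

section Kernel

variable (H : 𝓢(ℝ, ℂ)) (s : ℂ) (μ : ℝ)

/-- The function `y ↦ y ^ (-s - 1) * H (μ / y)` on `(0, ∞)`, extended by zero. -/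
def powMulCompInv (y : ℝ) : ℂ := if 0 < y then (y : ℂ) ^ (-s - 1) * H (μ / y) else 0

variable {μ} in
theorem norm_powMulCompInv {y : ℝ} (hy : 0 < y) :
    ‖powMulCompInv H s μ y‖ = y ^ (-s.re - 1) * ‖H (μ / y)‖ := by
  rw [powMulCompInv, if_pos hy, norm_mul, Complex.norm_cpow_eq_rpow_re_of_pos hy]
  simp

theorem powMulCompInv_of_nonpos {y : ℝ} (hy : y ≤ 0) : powMulCompInv H s μ y = 0 :=
  if_neg hy.not_gt

theorem powMulCompInv_div_mul {Q : ℝ} (hQ : 0 < Q) (y : ℝ) :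
    powMulCompInv H s (μ / Q) (Q * y) = (Q : ℂ) ^ (-s - 1) * powMulCompInv H s (μ / Q ^ 2) y := by
  rcases le_or_gt y 0 with hy | hy
  · rw [powMulCompInv_of_nonpos _ _ _ hy, mul_zero,
      powMulCompInv_of_nonpos _ _ _ (mul_nonpos_of_nonneg_of_nonpos hQ.le hy)]
  · rw [powMulCompInv, powMulCompInv, if_pos (mul_pos hQ hy), if_pos hy, Complex.ofReal_mul,
      Complex.mul_cpow_ofReal_nonneg hQ.le hy.le, mul_assoc]
    congr 3
    field_simp

theorem tendsto_powMulCompInv_zero (hμ : 0 < μ) : Tendsto (powMulCompInv H s μ) (𝓝[>] 0) (𝓝 0) := by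
  have hH : (fun y : ℝ ↦ H (μ / y)) =O[𝓝[>] 0] (· ^ (-(-(s.re + 2)))) := by
    have hdiv : Tendsto (fun y : ℝ ↦ μ / y) (𝓝[>] 0) atTop :=
      tendsto_inv_nhdsGT_zero.const_mul_atTop hμ
    refine (((rapidlyDecaying_schwartz H).isBigO_atTop (s.re + 2)).comp_tendsto hdiv).trans
      (IsBigO.of_bound (μ ^ (-(s.re + 2))) ?_)
    filter_upwards [self_mem_nhdsWithin] with y (hy : 0 < y)
    rw [Function.comp_apply, div_rpow hμ.le hy.le, rpow_neg hy.le (-(s.re + 2)), norm_div,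
      norm_inv, div_eq_mul_inv, norm_of_nonneg (rpow_nonneg hμ.le _)]
  have hpow : Tendsto (fun y : ℝ ↦ y ^ ((-s - 1).re - -(s.re + 2))) (𝓝[>] 0) (𝓝 0) := by
    have hexp : (-s - 1).re - -(s.re + 2) = 1 := by
      simp only [Complex.sub_re, Complex.neg_re, Complex.one_re]
      ring
    simpa only [hexp, rpow_one, id_eq] using! tendsto_nhdsWithin_of_tendsto_nhds tendsto_id
  refine (tendsto_cpow_mul_of_isBigO_rpow self_mem_nhdsWithin hH hpow).congr' ?_
  filter_upwards [self_mem_nhdsWithin] with y (hy : 0 < y)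
  rw [powMulCompInv, if_pos hy]

theorem continuous_powMulCompInv (hμ : 0 < μ) : Continuous (powMulCompInv H s μ) := by
  refine continuous_iff_continuousAt.2 fun y ↦ ?_
  rcases lt_trichotomy y 0 with hy | rfl | hy
  · refine continuousAt_const.congr (f := fun _ ↦ 0) ?_
    filter_upwards [Iio_mem_nhds hy] with z hz
    rw [powMulCompInv_of_nonpos _ _ _ (le_of_lt hz)]
  · refine continuousAt_iff_continuous_left'_right'.2 ⟨?_, ?_⟩ <;>
      rw [ContinuousWithinAt, powMulCompInv_of_nonpos _ _ _ le_rfl]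
    · refine tendsto_const_nhds.congr' ?_
      filter_upwards [self_mem_nhdsWithin] with z hz
      rw [powMulCompInv_of_nonpos _ _ _ (le_of_lt hz)]
    · exact tendsto_powMulCompInv_zero H s μ hμ
  · have hcont : ContinuousAt (fun y : ℝ ↦ (y : ℂ) ^ (-s - 1) * H (μ / y)) y :=
      (Complex.continuousAt_ofReal_cpow_const y _ (Or.inr hy.ne')).mul
        (H.continuous.continuousAt.comp (continuousAt_const.div continuousAt_id hy.ne'))
    refine hcont.congr ?_
    filter_upwards [Ioi_mem_nhds hy] with z (hz : 0 < z)
    rw [powMulCompInv, if_pos hz]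

theorem isBigO_powMulCompInv :
    powMulCompInv H s μ =O[cocompact ℝ] (|·| ^ (-(s.re + 1))) := by
  obtain ⟨C, -, hC⟩ := H.decay 0 0
  refine IsBigO.of_bound C (.of_forall fun y ↦ ?_)
  rcases le_or_gt y 0 with hy | hy
  · rw [powMulCompInv_of_nonpos _ _ _ hy, norm_zero]
    exact mul_nonneg ((norm_nonneg _).trans (by simpa using hC 0)) (norm_nonneg _)
  · rw [norm_powMulCompInv H s hy, abs_of_pos hy, norm_of_nonneg (by positivity), mul_comm,
      neg_add']
    gcongr
    simpa using hC (μ / y)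

theorem fourier_powMulCompInv (hμ : 0 < μ) (ν : ℝ) : 𝓕 (powMulCompInv H s μ) ν =
    (μ : ℂ) ^ (-s) * twistedMellin H s (2 * π * Complex.I * (ν * μ : ℝ)) := by
  have hμ' : (μ : ℂ) ≠ 0 := Complex.ofReal_ne_zero.2 hμ.ne'
  set F : ℝ → ℂ := fun u ↦ H u * Complex.exp (-(2 * π * Complex.I * (ν * μ : ℝ)) / u)
  have hF : (fun v : ℝ ↦ Complex.exp (↑(-2 * π * v * ν) * Complex.I) • powMulCompInv H s μ v) =
      (Ioi 0).indicator fun v : ℝ ↦ (v : ℂ) ^ (-s - 1) • F (μ * v⁻¹) := by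
    ext v
    by_cases hv : 0 < v
    · have hv' : (v : ℂ) ≠ 0 := Complex.ofReal_ne_zero.2 hv.ne'
      rw [indicator_of_mem (mem_Ioi.2 hv), powMulCompInv, if_pos hv]
      simp only [F, smul_eq_mul, div_eq_mul_inv]
      rw [mul_left_comm, mul_comm (Complex.exp _)]
      congr 3
      push_cast
      field_simp
    · rw [indicator_of_notMem (mt mem_Ioi.1 hv), powMulCompInv, if_neg hv, smul_zero]
  rw [Real.fourier_real_eq_integral_exp_smul, hF, integral_indicator measurableSet_Ioi]
  change mellin (fun v : ℝ ↦ (fun t ↦ F (μ * t)) v⁻¹) (-s) = _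
  rw [mellin_comp_inv fun t ↦ F (μ * t), neg_neg,
    mellin_comp_mul_left _ _ hμ, smul_eq_mul, twistedMellin]

end Kernel

section Poisson

variable (H : 𝓢(ℝ, ℂ)) {s : ℂ} {μ : ℝ}

theorem two_pi_I_mul_ofReal_re (x : ℝ) : (2 * π * Complex.I * (x : ℂ)).re = 0 := by
  simp

theorem summable_twistedMellin (hs : 0 < s.re) (hμ : 0 < μ) :
    Summable fun j : ℤ ↦ twistedMellin H s (2 * π * Complex.I * (j * μ : ℝ)) := by
  obtain ⟨C, hC⟩ := exists_norm_twistedMellinExt_le H (norm_nonneg s)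
  refine summable_int_of_norm_le_div_sq (C := C / (2 * π * μ) ^ 2) fun j hj ↦ ?_
  have hre := (two_pi_I_mul_ofReal_re (j * μ)).ge
  rw [twistedMellin_eq_twistedMellinExt H (by simp [hj, hμ.ne', pi_ne_zero]) (Or.inr ⟨hre, hs⟩)]
  refine (hC s _ hs.le le_rfl hre).trans_eq ?_
  have hnorm : ‖2 * π * Complex.I * ((j * μ : ℝ) : ℂ)‖ ^ 2 = (2 * π * μ) ^ 2 * (j : ℝ) ^ 2 := by
    simp [mul_pow, sq_abs]
    ring
  rw [hnorm, div_div]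

theorem tsum_powMulCompInv (hs : 0 < s.re) (hμ : 0 < μ) (x : ℝ) :
    ∑' r : ℤ, powMulCompInv H s μ (x + r) = (μ : ℂ) ^ (-s) *
      ∑' j : ℤ, twistedMellin H s (2 * π * Complex.I * (j * μ : ℝ)) * e2pi (j * x) := by
  rw [Real.tsum_eq_tsum_fourier_of_rpow_decay_of_summable (continuous_powMulCompInv H s μ hμ)
    (b := s.re + 1) (by linarith) (isBigO_powMulCompInv H s μ), ← tsum_mul_left]
  · refine tsum_congr fun j ↦ ?_
    rw [fourier_powMulCompInv H s μ hμ, fourier_coe_apply, mul_assoc, e2pi]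
    congr 3
    push_cast
    ring
  · simp only [fourier_powMulCompInv H s μ hμ]
    exact (summable_twistedMellin H hs hμ).mul_left _

theorem fourierInv_schwartz_apply (x : ℝ) : 𝓕⁻ H x = 𝓕 H (-x) := by
  rw [SchwartzMap.fourierInv_coe, SchwartzMap.fourier_coe, Real.fourierInv_eq_fourier_neg]

theorem fourier_schwartz_apply (ξ : ℝ) :
    𝓕 H ξ = ∫ x : ℝ, Complex.exp (-(2 * π * Complex.I * ξ * x)) * H x := by
  rw [SchwartzMap.fourier_coe, Real.fourier_real_eq_integral_exp_smul]
  congr 1 with x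
  rw [smul_eq_mul]
  congr 2
  push_cast
  ring

theorem tsum_e2pi_mul_schwartz (a : ℝ) :
    ∑' n : ℤ, e2pi (n * a) * H n = ∑' k : ℤ, 𝓕 H (k - a) := by
  have key := SchwartzMap.tsum_eq_tsum_fourier (𝓕 H) (-a)
  rw [← (Equiv.neg ℤ).tsum_eq fun n : ℤ ↦ 𝓕 (𝓕 H) n * fourier n ((-a : ℝ) : UnitAddCircle)] at key
  simp only [neg_add_eq_sub] at key
  rw [key]
  refine tsum_congr fun n ↦ ?_
  rw [Equiv.neg_apply, Int.cast_neg, ← fourierInv_schwartz_apply, FourierPair.fourierInv_fourier_eq,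
    fourier_coe_apply, e2pi, mul_comm]
  congr 2
  push_cast
  ring

theorem tsum_e2pi_mul_schwartz_mul {m : ℝ} (hm : 0 < m) (a : ℝ) :
    ∑' n : ℤ, e2pi (n * a) * H (m * n) = ∑' k : ℤ, (m : ℂ)⁻¹ * 𝓕 H ((k - a) / m) := by
  set G : 𝓢(ℝ, ℂ) := SchwartzMap.compCLMOfContinuousLinearEquiv ℂ
    (ContinuousLinearEquiv.unitsEquivAut ℝ (Units.mk0 m hm.ne')) H
  have hG (x : ℝ) : G x = H (m * x) := by simp [G, mul_comm]
  have hFG (ξ : ℝ) : 𝓕 G ξ = (m : ℂ)⁻¹ * 𝓕 H (ξ / m) := by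
    rw [fourier_schwartz_apply, fourier_schwartz_apply, ← Complex.ofReal_inv, ← Complex.real_smul,
      ← abs_of_pos (inv_pos.2 hm), ← Measure.integral_comp_mul_left _ m]
    congr 1 with x
    rw [hG]
    congr 3
    push_cast
    field_simp [Complex.ofReal_ne_zero.2 hm.ne']
  simpa only [hG, hFG] using tsum_e2pi_mul_schwartz G a

end Poisson

/-! ### Sums over divisor pairs -/

/-- The sum `∑ σ_{-s}(n) f(n)` over positive integers `n`, written as a sum over the factorisations
`n = p.1 * p.2`; at `s = 0` it is the sum of `f` weighted by the divisor function. -/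
def divisorSum (f : ℕ → ℂ) (s : ℂ) : ℂ :=
  ∑' p : ℕ+ × ℕ+, (p.1 : ℂ) ^ (-s) * f (p.1 * p.2)

theorem summable_pnat_prod_one_div_sq :
    Summable fun p : ℕ+ × ℕ+ ↦ 1 / (p.1 : ℝ) ^ 2 * (1 / (p.2 : ℝ) ^ 2) := by
  have hsq : Summable fun n : ℕ+ ↦ 1 / (n : ℝ) ^ 2 :=
    ((Real.summable_one_div_nat_pow (p := 2)).2 one_lt_two).comp_injective PNat.coe_injective
  exact hsq.mul_of_nonneg hsq (fun _ ↦ by positivity) fun _ ↦ by positivity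

section DivisorSum

variable {f : ℕ → ℂ} {C : ℝ} {s : ℂ}

theorem norm_cpow_mul_le (hf : ∀ n : ℕ+, ‖f n‖ ≤ C / n ^ 2) (hs : 0 ≤ s.re) (p : ℕ+ × ℕ+) :
    ‖(p.1 : ℂ) ^ (-s) * f (p.1 * p.2)‖ ≤ C * (1 / (p.1 : ℝ) ^ 2 * (1 / (p.2 : ℝ) ^ 2)) := by
  have hpow : ‖(p.1 : ℂ) ^ (-s)‖ ≤ 1 := by
    rw [Complex.norm_natCast_cpow_of_pos p.1.pos]
    exact rpow_le_one_of_one_le_of_nonpos (mod_cast p.1.pos) (by simpa using hs)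
  have hval : ‖f (p.1 * p.2)‖ ≤ C * (1 / (p.1 : ℝ) ^ 2 * (1 / (p.2 : ℝ) ^ 2)) := by
    refine (hf (p.1 * p.2)).trans_eq ?_
    rw [PNat.mul_coe, Nat.cast_mul]
    field_simp
  rw [norm_mul]
  exact (mul_le_of_le_one_left (norm_nonneg _) hpow).trans hval

theorem summable_cpow_mul (hf : ∀ n : ℕ+, ‖f n‖ ≤ C / n ^ 2) (hs : 0 ≤ s.re) :
    Summable fun p : ℕ+ × ℕ+ ↦ (p.1 : ℂ) ^ (-s) * f (p.1 * p.2) :=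
  .of_norm_bounded (summable_pnat_prod_one_div_sq.mul_left C) (norm_cpow_mul_le hf hs)

theorem divisorSum_zero (hf : ∀ n : ℕ+, ‖f n‖ ≤ C / n ^ 2) :
    divisorSum f 0 = ∑' n : ℕ, (dd n : ℂ) * f n := by
  have hsummable : Summable fun p : ℕ+ × ℕ+ ↦ f (p.1 * p.2) := by
    simpa using summable_cpow_mul hf (s := 0) le_rfl
  have hfiber (n : ℕ+) : ∑' x : (n : ℕ).divisorsAntidiagonal, f (x.1.1 * x.1.2) =
      (dd n : ℂ) * f n := by
    rw [tsum_fintype, Finset.univ_eq_attach,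
      Finset.sum_attach (n : ℕ).divisorsAntidiagonal fun x ↦ f (x.1 * x.2),
      Finset.sum_congr rfl fun x hx ↦ by rw [(Nat.mem_divisorsAntidiagonal.1 hx).1],
      Finset.sum_const, nsmul_eq_mul, dd, ← Nat.map_div_right_divisors,
      Finset.card_map]
  have hsigma := sigmaAntidiagonalEquivProd.summable_iff.2 hsummable
  calc divisorSum f 0 = ∑' p : ℕ+ × ℕ+, f (p.1 * p.2) := by simp [divisorSum]
    _ = ∑' n : ℕ+, ∑' x : (n : ℕ).divisorsAntidiagonal, f (x.1.1 * x.1.2) := by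
      rw [← sigmaAntidiagonalEquivProd.tsum_eq]
      exact hsigma.tsum_sigma
    _ = ∑' n : ℕ+, (dd n : ℂ) * f n := tsum_congr hfiber
    _ = ∑' n : ℕ, (dd n : ℂ) * f n :=
      tsum_pnat_eq_tsum_of_eq_zero (f := fun n ↦ (dd n : ℂ) * f n) (by simp [dd])

theorem divisorSum_congr {f' : ℕ → ℂ} (hff' : ∀ n : ℕ+, f n = f' n) (s : ℂ) :
    divisorSum f s = divisorSum f' s :=
  tsum_congr fun p ↦ congrArg _ (hff' (p.1 * p.2))

theorem divisorSum_const_mul (c : ℂ) (f : ℕ → ℂ) (s : ℂ) :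
    divisorSum (fun n ↦ c * f n) s = c * divisorSum f s := by
  simp only [divisorSum, mul_left_comm _ c, tsum_mul_left]

theorem divisorSum_add {f' : ℕ → ℂ} {C' : ℝ} (hf : ∀ n : ℕ+, ‖f n‖ ≤ C / n ^ 2)
    (hf' : ∀ n : ℕ+, ‖f' n‖ ≤ C' / n ^ 2) (hs : 0 ≤ s.re) :
    divisorSum (fun n ↦ f n + f' n) s = divisorSum f s + divisorSum f' s := by
  simp only [divisorSum, mul_add]
  exact (summable_cpow_mul hf hs).tsum_add (summable_cpow_mul hf' hs)

end DivisorSum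

section Parameter

variable {F : ℂ → ℕ → ℂ} {C : ℝ} {U : Set ℂ}

theorem differentiableOn_divisorSum (hU : IsOpen U) (hre : ∀ s ∈ U, 0 ≤ s.re)
    (hF : ∀ n : ℕ+, DifferentiableOn ℂ (fun s ↦ F s n) U)
    (hbound : ∀ s ∈ U, ∀ n : ℕ+, ‖F s n‖ ≤ C / n ^ 2) :
    DifferentiableOn ℂ (fun s ↦ divisorSum (F s) s) U := by
  refine Complex.differentiableOn_tsum_of_summable_norm (summable_pnat_prod_one_div_sq.mul_left C)
    (fun p ↦ ?_) hU fun p s hs ↦ norm_cpow_mul_le (hbound s hs) (hre s hs) p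
  have hpow : DifferentiableOn ℂ (fun s : ℂ ↦ (p.1 : ℂ) ^ (-s)) U :=
    (differentiable_neg.const_cpow (.inl (by simp))).differentiableOn
  exact hpow.fun_mul (hF (p.1 * p.2))

theorem continuousOn_divisorSum (hre : ∀ s ∈ U, 0 ≤ s.re)
    (hF : ∀ n : ℕ+, ContinuousOn (fun s ↦ F s n) U)
    (hbound : ∀ s ∈ U, ∀ n : ℕ+, ‖F s n‖ ≤ C / n ^ 2) :
    ContinuousOn (fun s ↦ divisorSum (F s) s) U := by
  refine continuousOn_tsum (fun p ↦ ?_) (summable_pnat_prod_one_div_sq.mul_left C)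
    fun p s hs ↦ norm_cpow_mul_le (hbound s hs) (hre s hs) p
  have hpow : Continuous fun s : ℂ ↦ (p.1 : ℂ) ^ (-s) :=
    continuous_neg.const_cpow (.inl (by simp))
  exact hpow.continuousOn.fun_mul (hF (p.1 * p.2))

end Parameter

/-! ### The Voronoi identity in the half-plane of absolute convergence -/

theorem tsum_arithmeticProgression {q : ℤ} (hq : q ≠ 0) (a : ℤ) (F : ℤ → ℂ) :
    ∑' k : ℤ, F (a + q * k) = ∑' l : ℤ, if q ∣ l - a then F l else 0 := by
  have hinj : Function.Injective fun k : ℤ ↦ a + q * k := fun k k' h ↦ by simpa [hq] using h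
  have hsupport : Function.support (fun l ↦ if q ∣ l - a then F l else 0) ⊆
      range fun k : ℤ ↦ a + q * k := by
    intro l hl
    by_contra hrange
    refine hl (if_neg fun ⟨k, hk⟩ ↦ hrange ⟨k, ?_⟩)
    linear_combination -hk
  rw [← hinj.tsum_eq hsupport]
  simp

theorem tsum_int_eq_tsum_pnat_of_nonpos {f : ℤ → ℂ} (hf : ∀ n ≤ 0, f n = 0) :
    ∑' n : ℤ, f n = ∑' n : ℕ+, f n := by
  have hinj : Function.Injective fun n : ℕ+ ↦ ((n : ℕ) : ℤ) := fun m n h ↦ by simpa using h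
  refine (hinj.tsum_eq fun n hn ↦ ?_).symm
  have hpos : 0 < n := not_le.1 fun h ↦ hn (hf n h)
  exact ⟨⟨n.toNat, by lia⟩, Int.toNat_of_nonneg hpos.le⟩

theorem dvd_add_mul_iff_dvd_sub_neg {q d b : ℤ} (hb : q ∣ d * b - 1) (m l : ℤ) :
    q ∣ l + m * d ↔ q ∣ m - -(b * l) := by
  obtain ⟨k, hk⟩ := hb
  constructor
  · rintro ⟨t, ht⟩
    exact ⟨b * t - m * k, by linear_combination b * ht - m * hk⟩
  · rintro ⟨t, ht⟩
    exact ⟨d * t - l * k, by linear_combination d * ht - l * hk⟩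

theorem summable_pnat_cpow_neg {s : ℂ} (hs : 1 < s.re) : Summable fun n : ℕ+ ↦ (n : ℂ) ^ (-s) := by
  have hnat : Summable fun n : ℕ ↦ (n : ℂ) ^ (-s) := by
    simpa [Complex.cpow_neg] using Complex.summable_one_div_nat_cpow.2 hs
  exact hnat.comp_injective PNat.coe_injective

theorem tsum_pnat_cpow_neg {s : ℂ} (hs : 1 < s.re) :
    ∑' n : ℕ+, (n : ℂ) ^ (-s) = riemannZeta s := by
  rw [zeta_eq_tsum_one_div_nat_add_one_cpow hs,
    tsum_pnat_eq_tsum_succ (f := fun n : ℕ ↦ (n : ℂ) ^ (-s))]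
  simp [Complex.cpow_neg]

theorem exists_norm_schwartz_le (H : 𝓢(ℝ, ℂ)) : ∃ C, 0 ≤ C ∧ ∀ x, ‖H x‖ ≤ C / (1 + x ^ 2) := by
  obtain ⟨C₀, hC₀, h₀⟩ := H.decay 0 0
  obtain ⟨C₂, hC₂, h₂⟩ := H.decay 2 0
  refine ⟨C₀ + C₂, by positivity, fun x ↦ (le_div_iff₀ (by positivity)).2 ?_⟩
  have h₀x : ‖H x‖ ≤ C₀ := by simpa using h₀ x
  have h₂x : x ^ 2 * ‖H x‖ ≤ C₂ := by simpa using h₂ x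
  linarith

/-- The term of the double sum obtained by applying Poisson summation to the second variable of
`∑ m ^ (-s) * e(m n d / q) * g (m n)`; here `H` is the Fourier transform of `g`, and the congruence
picks out the frequencies `l / q` that occur. -/
def poissonTerm (H : 𝓢(ℝ, ℂ)) (q : ℕ) (d : ℤ) (s : ℂ) (m l : ℤ) : ℂ :=
  if (q : ℤ) ∣ l + m * d then powMulCompInv H s (l / q) m else 0

section PoissonTerm

variable {q : ℕ} {d b : ℤ} {s : ℂ}

theorem norm_powMulCompInv_le {H : 𝓢(ℝ, ℂ)} {C Q : ℝ} (hC : ∀ x, ‖H x‖ ≤ C / (1 + x ^ 2))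
    (hQ : 1 ≤ Q) {m : ℝ} (hm : 1 ≤ m) (l : ℝ) : ‖powMulCompInv H s (l / Q) m‖ ≤
      m ^ (1 - s.re) * (C * Q ^ 2 / (1 + l ^ 2)) := by
  have hm0 : 0 < m := one_pos.trans_le hm
  have hC0 : 0 ≤ C := (norm_nonneg _).trans (by simpa using hC 0)
  have hpow : m ^ (1 - s.re) = m ^ (-s.re - 1) * m ^ 2 := by
    rw [← rpow_natCast, ← rpow_add hm0]
    congr 1
    push_cast
    ring
  have hdenom : 1 + l ^ 2 ≤ (Q * m) ^ 2 + l ^ 2 := by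
    gcongr
    exact one_le_pow₀ (one_le_mul_of_one_le_of_one_le hQ hm)
  have hvalue : C / (1 + (l / Q / m) ^ 2) = m ^ 2 * (C * Q ^ 2 / ((Q * m) ^ 2 + l ^ 2)) := by
    field_simp
  rw [norm_powMulCompInv H s hm0, hpow, mul_assoc]
  gcongr
  refine (hC _).trans (hvalue.trans_le ?_)
  gcongr

theorem summable_poissonTerm (H : 𝓢(ℝ, ℂ)) (hq : 0 < q) (d : ℤ) (hs : 2 < s.re) :
    Summable fun p : ℕ+ × ℤ ↦ poissonTerm H q d s p.1 p.2 := by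
  obtain ⟨C, hC0, hC⟩ := exists_norm_schwartz_le H
  have hm : Summable fun m : ℕ+ ↦ (m : ℝ) ^ (1 - s.re) :=
    (Real.summable_nat_rpow.2 (by linarith)).comp_injective PNat.coe_injective
  have hl : Summable fun l : ℤ ↦ C * q ^ 2 / (1 + (l : ℝ) ^ 2) := by
    refine summable_int_of_norm_le_div_sq (C := C * q ^ 2) fun l hl ↦ ?_
    rw [norm_of_nonneg (by positivity)]
    gcongr
    simp
  refine .of_norm_bounded
    (hm.mul_of_nonneg hl (fun _ ↦ by positivity) fun _ ↦ by positivity) fun p ↦ ?_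
  rw [poissonTerm]
  split_ifs
  · exact norm_powMulCompInv_le hC (mod_cast hq) (mod_cast p.1.pos) p.2
  · rw [norm_zero]
    positivity

theorem tsum_poissonTerm_row (g : 𝓢(ℝ, ℂ)) (hg : ∀ x ≤ 0, g x = 0) (hq : 0 < q) (d : ℤ) (s : ℂ)
    (m : ℕ+) : ∑' n : ℕ+, (m : ℂ) ^ (-s) * (e2pi ((m * n : ℕ) * d / q) * g (m * n : ℕ)) =
      ∑' l : ℤ, poissonTerm (𝓕 g) q d s m l := by
  have hq0 : (q : ℝ) ≠ 0 := mod_cast hq.ne'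
  have hm0 : (0 : ℝ) < m := mod_cast m.pos
  have hmc : (m : ℂ) ≠ 0 := by simp
  have hprog := tsum_arithmeticProgression (mod_cast hq.ne' : (q : ℤ) ≠ 0) (-(m * d))
    fun l ↦ powMulCompInv (𝓕 g) s (l / q) m
  simp only [sub_neg_eq_add] at hprog
  calc _ = ∑' n : ℤ, (m : ℂ) ^ (-s) * (e2pi (n * (m * d / q)) * g (m * n)) := by
        rw [tsum_int_eq_tsum_pnat_of_nonpos]
        · refine tsum_congr fun n ↦ ?_
          push_cast
          congr 3
          ring
        · intro n hn
          rw [hg _ (mul_nonpos_of_nonneg_of_nonpos hm0.le (mod_cast hn)), mul_zero, mul_zero]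
    _ = ∑' k : ℤ, powMulCompInv (𝓕 g) s ((-(m * d) + q * k : ℤ) / q) m := by
        rw [tsum_mul_left, tsum_e2pi_mul_schwartz_mul g hm0, ← tsum_mul_left]
        refine tsum_congr fun k ↦ ?_
        rw [powMulCompInv, if_pos hm0, ← mul_assoc, ← div_eq_mul_inv, Complex.ofReal_natCast,
          Complex.cpow_sub _ _ hmc, Complex.cpow_one]
        congr 2
        push_cast
        field_simp
        ring
    _ = _ := by
        rw [hprog]
        rfl

theorem tsum_poissonTerm_column (H : 𝓢(ℝ, ℂ)) (hq : 0 < q) (hb : (q : ℤ) ∣ d * b - 1) (s : ℂ)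
    (l : ℤ) : ∑' m : ℕ+, poissonTerm H q d s m l = (q : ℂ) ^ (-s - 1) *
      ∑' r : ℤ, powMulCompInv H s (l / q ^ 2) (-(b * l) / q + r) := by
  have hq0 : (0 : ℝ) < q := mod_cast hq
  have hvanish : ∀ m ≤ 0, poissonTerm H q d s m l = 0 := fun m hm ↦ by
    rw [poissonTerm, powMulCompInv_of_nonpos _ _ _ (mod_cast hm), ite_self]
  rw [← tsum_int_eq_tsum_pnat_of_nonpos hvanish]
  simp only [poissonTerm, dvd_add_mul_iff_dvd_sub_neg hb]
  rw [← tsum_arithmeticProgression (mod_cast hq.ne') (-(b * l)) fun m ↦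
    powMulCompInv H s (l / q) m, ← tsum_mul_left]
  refine tsum_congr fun r ↦ ?_
  rw [← Complex.ofReal_natCast, ← powMulCompInv_div_mul _ _ _ hq0]
  congr 1
  push_cast
  field_simp

theorem tsum_poissonTerm_column_zero (H : 𝓢(ℝ, ℂ)) (hq : 0 < q) (hb : (q : ℤ) ∣ d * b - 1)
    (hs : 0 < s.re) : ∑' m : ℕ+, poissonTerm H q d s m 0 =
      (q : ℂ) ^ (-s - 1) * (riemannZeta (1 + s) * H 0) := by
  rw [tsum_poissonTerm_column H hq hb, tsum_int_eq_tsum_pnat_of_nonpos,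
    ← tsum_pnat_cpow_neg (by simpa using hs), ← tsum_mul_right]
  · congr 1
    refine tsum_congr fun n ↦ ?_
    have hn : (0 : ℝ) < n := mod_cast n.pos
    simp [powMulCompInv, hn, sub_eq_neg_add, add_comm]
  · intro n hn
    exact powMulCompInv_of_nonpos _ _ _ (by simpa using hn)

end PoissonTerm

theorem powMulCompInv_fourier_neg (g : 𝓢(ℝ, ℂ)) (s : ℂ) (μ y : ℝ) :
    powMulCompInv (𝓕 g) s (-μ) y = powMulCompInv (𝓕⁻ g) s μ y := by
  simp only [powMulCompInv, fourierInv_schwartz_apply, neg_div]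

/-- The dual coefficient at frequencies `± n / q`: the continued Mellin transform of `H` twisted by
`exp (∓ 2 π i n / (q ^ 2 u))`, weighted by `e (± n a / q)`. -/
def dualPair (H : 𝓢(ℝ, ℂ)) (q : ℕ) (a : ℤ) (s : ℂ) (n : ℕ) : ℂ :=
  e2pi (n * a / q) * twistedMellinExt H s (2 * π * Complex.I * (n / q ^ 2 : ℝ)) +
    e2pi (-(n * a / q)) * twistedMellinExt H s (2 * π * Complex.I * (-(n / q ^ 2) : ℝ))

section DualPair

variable (H : 𝓢(ℝ, ℂ)) {q : ℕ} (a : ℤ) {s : ℂ}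

theorem exists_norm_twistedMellinExt_two_pi_I_le {R : ℝ} (hR : 0 ≤ R) :
    ∃ C, ∀ s : ℂ, 0 ≤ s.re → ‖s‖ ≤ R → ∀ (n : ℕ+) (x : ℝ), |x| = n / q ^ 2 →
      ‖twistedMellinExt H s (2 * π * Complex.I * x)‖ ≤ C / n ^ 2 := by
  obtain ⟨C, hC⟩ := exists_norm_twistedMellinExt_le H hR
  refine ⟨C * q ^ 4 / (2 * π) ^ 2, fun s hs hsR n x hx ↦ ?_⟩
  have hnorm : ‖2 * π * Complex.I * (x : ℂ)‖ = 2 * π * (n / q ^ 2) := by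
    simp [hx, abs_of_pos pi_pos]
  refine (hC s _ hs hsR (two_pi_I_mul_ofReal_re x).ge).trans_eq ?_
  rw [hnorm]
  field_simp

theorem exists_norm_dualPair_le {R : ℝ} (hR : 0 ≤ R) : ∃ C, ∀ s : ℂ, 0 ≤ s.re → ‖s‖ ≤ R →
    ∀ n : ℕ+, ‖dualPair H q a s n‖ ≤ C / n ^ 2 := by
  obtain ⟨C, hC⟩ := exists_norm_twistedMellinExt_two_pi_I_le (q := q) H hR
  refine ⟨C + C, fun s hs hsR n ↦ ?_⟩
  have habs : |(n / q ^ 2 : ℝ)| = n / q ^ 2 := abs_of_nonneg (by positivity)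
  refine (norm_add_le _ _).trans ?_
  rw [norm_mul, norm_mul, norm_e2pi, norm_e2pi, one_mul, one_mul, add_div]
  exact add_le_add (hC s hs hsR n _ habs) (hC s hs hsR n _ (by rw [abs_neg, habs]))

theorem cpow_mul_div_sq_cpow (hq : 0 < q) (s : ℂ) (l : ℕ+) :
    (q : ℂ) ^ (-s - 1) * ((l / q ^ 2 : ℝ) : ℂ) ^ (-s) = (q : ℂ) ^ (s - 1) * (l : ℂ) ^ (-s) := by
  have hqc : (q : ℂ) ≠ 0 := mod_cast hq.ne'
  have hl : (l : ℂ) ^ (-s) = ((l / q ^ 2 : ℝ) : ℂ) ^ (-s) * (q : ℂ) ^ (-s) * (q : ℂ) ^ (-s) := by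
    rw [mul_assoc, ← Complex.natCast_mul_natCast_cpow, ← Nat.cast_mul, ← Complex.ofReal_natCast,
      ← Complex.ofReal_natCast, ← Complex.mul_cpow_ofReal_nonneg (by positivity) (by positivity),
      ← Complex.ofReal_mul]
    congr 2
    push_cast
    field_simp
  have hq_pow : (q : ℂ) ^ (-s - 1) = (q : ℂ) ^ (s - 1) * (q : ℂ) ^ (-s) * (q : ℂ) ^ (-s) := by
    rw [← Complex.cpow_add _ _ hqc, ← Complex.cpow_add _ _ hqc]
    congr 1
    ring
  rw [hl, hq_pow]
  ring

theorem tsum_twistedMellin_mul_e2pi (hq : 0 < q) (hs : 0 < s.re) (l : ℕ+) :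
    ∑' j : ℤ, twistedMellin H s (2 * π * Complex.I * (j * (l / q ^ 2) : ℝ)) *
        e2pi (j * (a * l / q)) = mellin H s + ∑' j : ℕ+, dualPair H q a s (l * j) := by
  have hμ : (0 : ℝ) < l / q ^ 2 := div_pos (mod_cast l.pos) (pow_pos (mod_cast hq) 2)
  set F : ℤ → ℂ := fun j ↦ twistedMellin H s (2 * π * Complex.I * (j * (l / q ^ 2) : ℝ)) *
    e2pi (j * (a * l / q)) with hF
  have hF_summable : Summable F :=
    .of_norm_bounded (summable_twistedMellin H hs hμ).norm fun j ↦ by simp [hF, norm_e2pi]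
  have hpos : Summable fun j : ℕ+ ↦ F j := hF_summable.comp_injective fun m n h ↦ by simpa using h
  have hneg : Summable fun j : ℕ+ ↦ F (-j) :=
    hF_summable.comp_injective fun m n h ↦ by simpa using h
  have hzero : F 0 = mellin H s := by simp [hF, e2pi, twistedMellin]
  have hcontinue (x : ℝ) (hx : x ≠ 0) : twistedMellin H s (2 * π * Complex.I * x) =
      twistedMellinExt H s (2 * π * Complex.I * x) :=
    twistedMellin_eq_twistedMellinExt H (by simp [hx, pi_ne_zero])
      (.inr ⟨(two_pi_I_mul_ofReal_re x).ge, hs⟩)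
  rw [tsum_int_eq_zero_add_tsum_pnat hF_summable, hzero, add_assoc, ← hpos.tsum_add hneg]
  congr 1
  refine tsum_congr fun j ↦ ?_
  simp only [hF, dualPair]
  rw [hcontinue _ (mul_ne_zero (by simp) hμ.ne'), hcontinue _ (mul_ne_zero (by simp) hμ.ne'),
    mul_comm, mul_comm (twistedMellinExt H s _) (e2pi (_ * _))]
  push_cast
  congr 3 <;> ring_nf

theorem tsum_powMulCompInv_eq_dualPair (hq : 0 < q) (hs : 0 < s.re) (l : ℕ+) :
    (q : ℂ) ^ (-s - 1) * ∑' r : ℤ, powMulCompInv H s (l / q ^ 2) (a * l / q + r) =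
      (q : ℂ) ^ (s - 1) * ((l : ℂ) ^ (-s) * mellin H s +
        ∑' j : ℕ+, (l : ℂ) ^ (-s) * dualPair H q a s (l * j)) := by
  have hμ : (0 : ℝ) < l / q ^ 2 := div_pos (mod_cast l.pos) (pow_pos (mod_cast hq) 2)
  rw [tsum_powMulCompInv H hs hμ, tsum_twistedMellin_mul_e2pi H a hq hs, ← mul_assoc,
    cpow_mul_div_sq_cpow hq, tsum_mul_left]
  ring

theorem tsum_tsum_powMulCompInv (hq : 0 < q) (hs : 1 < s.re) :
    ∑' l : ℕ+, (q : ℂ) ^ (-s - 1) * ∑' r : ℤ, powMulCompInv H s (l / q ^ 2) (a * l / q + r) =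
      (q : ℂ) ^ (s - 1) * (riemannZeta s * mellin H s + divisorSum (dualPair H q a s) s) := by
  have hs0 : 0 < s.re := one_pos.trans hs
  obtain ⟨C, hC⟩ := exists_norm_dualPair_le (q := q) H a (norm_nonneg s)
  have hsummable := summable_cpow_mul (hC s hs0.le le_rfl) hs0.le
  simp only [tsum_powMulCompInv_eq_dualPair H a hq hs0]
  rw [tsum_mul_left, ((summable_pnat_cpow_neg hs).mul_right _).tsum_add hsummable.prod,
    tsum_mul_right, tsum_pnat_cpow_neg hs, divisorSum, hsummable.tsum_prod]

end DualPair

theorem exists_norm_e2pi_mul_le (g : 𝓢(ℝ, ℂ)) (q : ℕ) (d : ℤ) :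
    ∃ C, ∀ n : ℕ+, ‖e2pi ((n : ℕ) * d / q) * g (n : ℕ)‖ ≤ C / n ^ 2 := by
  obtain ⟨C, hC0, hC⟩ := exists_norm_schwartz_le g
  refine ⟨C, fun n ↦ ?_⟩
  rw [norm_mul, norm_e2pi, one_mul]
  refine (hC n).trans ?_
  gcongr
  simp

section Identity

variable (g : 𝓢(ℝ, ℂ)) {q : ℕ} {d b : ℤ} {s : ℂ}

theorem divisorSum_eq_tsum_poissonTerm (hg : ∀ x ≤ 0, g x = 0) (hq : 0 < q) (d : ℤ)
    (hs : 0 ≤ s.re) : divisorSum (fun n ↦ e2pi (n * d / q) * g n) s =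
      ∑' m : ℕ+, ∑' l : ℤ, poissonTerm (𝓕 g) q d s m l := by
  obtain ⟨C, hC⟩ := exists_norm_e2pi_mul_le g q d
  rw [divisorSum, (summable_cpow_mul (f := fun n ↦ e2pi (n * d / q) * g n) hC hs).tsum_prod]
  exact tsum_congr fun m ↦ tsum_poissonTerm_row g hg hq d s m

theorem tsum_poissonTerm_column_neg (hq : 0 < q) (hb : (q : ℤ) ∣ d * b - 1) (l : ℕ+) :
    ∑' m : ℕ+, poissonTerm (𝓕 g) q d s m (-l) = (q : ℂ) ^ (-s - 1) *
      ∑' r : ℤ, powMulCompInv (𝓕⁻ g) s (l / q ^ 2) (b * l / q + r) := by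
  rw [tsum_poissonTerm_column _ hq hb]
  congr 1
  refine tsum_congr fun r ↦ ?_
  rw [← powMulCompInv_fourier_neg]
  push_cast
  rw [neg_div, mul_neg, neg_neg]

theorem divisorSum_eq_of_two_lt_re (hg : ∀ x ≤ 0, g x = 0) (hq : 0 < q)
    (hb : (q : ℤ) ∣ d * b - 1) (hs : 2 < s.re) :
    divisorSum (fun n ↦ e2pi (n * d / q) * g n) s =
      (q : ℂ) ^ (-s - 1) * (riemannZeta (1 + s) * 𝓕 g 0) + (q : ℂ) ^ (s - 1) *
        (riemannZeta s * (mellin (𝓕 g : 𝓢(ℝ, ℂ)) s + mellin (𝓕⁻ g : 𝓢(ℝ, ℂ)) s) +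
        (divisorSum (dualPair (𝓕 g) q (-b) s) s + divisorSum (dualPair (𝓕⁻ g) q b s) s)) := by
  have hs0 : 0 < s.re := two_pos.trans hs
  have hsummable := summable_poissonTerm (𝓕 g) hq d hs
  have hcolumn : Summable fun l : ℤ ↦ ∑' m : ℕ+, poissonTerm (𝓕 g) q d s m l :=
    ((Equiv.prodComm ℤ ℕ+).summable_iff.2 hsummable).prod
  have hpos : ∑' l : ℕ+, ∑' m : ℕ+, poissonTerm (𝓕 g) q d s m l = (q : ℂ) ^ (s - 1) *
      (riemannZeta s * mellin (𝓕 g : 𝓢(ℝ, ℂ)) s + divisorSum (dualPair (𝓕 g) q (-b) s) s) := by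
    rw [← tsum_tsum_powMulCompInv _ _ hq (by linarith)]
    simp only [tsum_poissonTerm_column _ hq hb, Int.cast_natCast, Int.cast_neg, neg_mul]
  have hneg : ∑' l : ℕ+, ∑' m : ℕ+, poissonTerm (𝓕 g) q d s m (-l) = (q : ℂ) ^ (s - 1) *
      (riemannZeta s * mellin (𝓕⁻ g : 𝓢(ℝ, ℂ)) s + divisorSum (dualPair (𝓕⁻ g) q b s) s) := by
    rw [← tsum_tsum_powMulCompInv _ _ hq (by linarith)]
    simp only [tsum_poissonTerm_column_neg g hq hb]
  have hswap : ∑' m : ℕ+, ∑' l : ℤ, poissonTerm (𝓕 g) q d s m l =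
      ∑' l : ℤ, ∑' m : ℕ+, poissonTerm (𝓕 g) q d s m l :=
    (Summable.tsum_comm (f := fun (m : ℕ+) (l : ℤ) ↦ poissonTerm (𝓕 g) q d s m l) hsummable).symm
  rw [divisorSum_eq_tsum_poissonTerm g hg hq d hs0.le, hswap,
    tsum_int_eq_zero_add_tsum_pnat hcolumn, tsum_poissonTerm_column_zero _ hq hb hs0, hpos, hneg]
  ring

end Identity

/-! ### The Mellin transform of a Fourier transform -/

section Flat

theorem exists_norm_le_mul_pow_of_eq_zero (n : ℕ) (g : 𝓢(ℝ, ℂ)) (hg : ∀ x ≤ 0, g x = 0) :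
    ∃ C, 0 ≤ C ∧ ∀ x, 0 ≤ x → ‖g x‖ ≤ C * x ^ n := by
  induction n generalizing g with
  | zero =>
    obtain ⟨C, hC, hbound⟩ := g.decay 0 0
    exact ⟨C, hC.le, fun x _ ↦ by simpa using hbound x⟩
  | succ n ih =>
    have hclosed : IsClosed {x | SchwartzMap.derivCLM ℂ ℂ g x = 0} :=
      isClosed_eq (SchwartzMap.continuous _) continuous_const
    have hneg : Iio (0 : ℝ) ⊆ {x | SchwartzMap.derivCLM ℂ ℂ g x = 0} := fun x hx ↦ by
      have hzero : g =ᶠ[𝓝 x] fun _ ↦ 0 :=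
        eventually_of_mem (Iio_mem_nhds hx) fun y hy ↦ hg y (le_of_lt hy)
      simp [hzero.deriv_eq]
    have hderiv : ∀ x ≤ 0, SchwartzMap.derivCLM ℂ ℂ g x = 0 := fun x hx ↦
      hclosed.closure_subset_iff.2 hneg (by simpa using hx)
    obtain ⟨C, hC, hbound⟩ := ih _ hderiv
    refine ⟨C, hC, fun x hx ↦ ?_⟩
    have hmvt := (convex_Icc 0 x).norm_image_sub_le_of_norm_deriv_le (f := g) (C := C * x ^ n)
      (fun y _ ↦ g.differentiableAt)
      (fun y hy ↦ (hbound y hy.1).trans (by gcongr; exacts [hy.1, hy.2]))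
      (left_mem_Icc.2 hx) (right_mem_Icc.2 hx)
    simpa [hg 0 le_rfl, norm_of_nonneg hx, pow_succ, mul_assoc, abs_of_nonneg hx] using hmvt

variable {g : 𝓢(ℝ, ℂ)} (hg : ∀ x ≤ 0, g x = 0)
include hg

theorem isBigO_zero_of_eq_zero (b : ℝ) : g =O[𝓝[>] 0] (· ^ (-b)) := by
  obtain ⟨n, hn⟩ := exists_nat_gt (-b)
  obtain ⟨C, hC, hbound⟩ := exists_norm_le_mul_pow_of_eq_zero n g hg
  refine IsBigO.of_bound C ?_
  filter_upwards [Ioo_mem_nhdsGT one_pos] with x hx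
  rw [norm_of_nonneg (rpow_nonneg hx.1.le _)]
  refine (hbound x hx.1.le).trans ?_
  gcongr
  rw [← rpow_natCast]
  exact rpow_le_rpow_of_exponent_ge hx.1 hx.2.le hn.le

theorem hasDerivAt_mellin_of_eq_zero (s : ℂ) :
    MellinConvergent (fun t ↦ log t • g t) s ∧
      HasDerivAt (mellin g) (mellin (fun t ↦ log t • g t) s) s :=
  mellin_hasDerivAt_of_isBigO_rpow
    (g.continuous.continuousOn.locallyIntegrableOn measurableSet_Ioi)
    ((rapidlyDecaying_schwartz g).isBigO_atTop (s.re + 1)) (lt_add_one _)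
    (isBigO_zero_of_eq_zero hg (s.re - 1)) (sub_one_lt _)

theorem mellinConvergent_of_eq_zero (s : ℂ) : MellinConvergent g s :=
  mellinConvergent_of_isBigO_rpow
    (g.continuous.continuousOn.locallyIntegrableOn measurableSet_Ioi)
    ((rapidlyDecaying_schwartz g).isBigO_atTop (s.re + 1)) (lt_add_one _)
    (isBigO_zero_of_eq_zero hg (s.re - 1)) (sub_one_lt _)

theorem setIntegral_Ioi_mul_eq_integral (f : ℝ → ℂ) :
    ∫ x in Ioi (0 : ℝ), g x * f x = ∫ x, g x * f x :=
  setIntegral_eq_integral_of_forall_compl_eq_zero fun x hx ↦ by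
    rw [hg x (not_lt.1 hx), zero_mul]

end Flat

/-- `H` is given on `(0, ∞)` by the Laplace transform of `g` along the ray through `ω`; with
`ω = ± 2 π i` this covers the Fourier transform of `g` and its inverse. -/
def IsLaplaceTransform (g H : 𝓢(ℝ, ℂ)) (ω : ℂ) : Prop :=
  ∀ u : ℝ, 0 < u → H u = ∫ x in Ioi (0 : ℝ), g x * Complex.exp (-(ω * x * u))

theorem isLaplaceTransform_fourier {g : 𝓢(ℝ, ℂ)} (hg : ∀ x ≤ 0, g x = 0) :
    IsLaplaceTransform g (𝓕 g) (2 * π * Complex.I) := fun u _ ↦ by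
  rw [setIntegral_Ioi_mul_eq_integral hg, fourier_schwartz_apply]
  congr 1 with x
  rw [mul_comm, mul_right_comm _ (u : ℂ)]

theorem isLaplaceTransform_fourierInv {g : 𝓢(ℝ, ℂ)} (hg : ∀ x ≤ 0, g x = 0) :
    IsLaplaceTransform g (𝓕⁻ g) (-(2 * π * Complex.I)) := fun u _ ↦ by
  rw [setIntegral_Ioi_mul_eq_integral hg, fourierInv_schwartz_apply, fourier_schwartz_apply]
  congr 1 with x
  rw [mul_comm, Complex.ofReal_neg]
  ring_nf

theorem RapidlyDecaying.tendsto_twistedMellin_mul_exp {φ : ℝ → ℂ} {s c : ℂ}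
    (hφ : RapidlyDecaying φ) (h : 0 < c.re ∨ 0 ≤ c.re ∧ 0 < s.re) :
    Tendsto (fun δ : ℝ ↦ twistedMellin (fun u ↦ φ u * Complex.exp (-(δ * u))) s c) (𝓝[>] 0)
      (𝓝 (twistedMellin φ s c)) := by
  have hmeas (δ : ℝ) : AEStronglyMeasurable (fun u : ℝ ↦ Complex.exp (-(δ * u)))
      (volume.restrict (Ioi 0)) :=
    Continuous.aestronglyMeasurable (by fun_prop)
  refine tendsto_integral_filter_of_dominated_convergence _ (.of_forall fun δ ↦ ?_) ?_
    (hφ.mellinConvergent_twist h).norm (.of_forall fun u ↦ ?_)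
  · convert! (hφ.aestronglyMeasurable_twist s c).mul (hmeas δ) using 2 with u
    simp only [smul_eq_mul, Pi.mul_apply]
    ring
  · filter_upwards [self_mem_nhdsWithin] with δ (hδ : 0 < δ)
    filter_upwards [ae_restrict_mem measurableSet_Ioi] with u (hu : 0 < u)
    have hexp : ‖Complex.exp (-(δ * u))‖ ≤ 1 := by
      rw [Complex.norm_exp, exp_le_one_iff]
      simpa using mul_nonneg hδ.le hu.le
    simp only [norm_smul, norm_mul]
    gcongr
    exact mul_le_of_le_one_right (norm_nonneg _) hexp
  · refine Tendsto.mono_left (Continuous.tendsto' ?_ 0 _ ?_) nhdsWithin_le_nhds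
    · fun_prop
    · simp

theorem mul_ofReal_cpow {z : ℂ} (hz : z ≠ 0) {x : ℝ} (hx : 0 < x) (s : ℂ) :
    (z * x) ^ s = z ^ s * (x : ℂ) ^ s := by
  have hx' : (x : ℂ) ≠ 0 := Complex.ofReal_ne_zero.2 hx.ne'
  rw [mul_comm z, Complex.cpow_def_of_ne_zero (mul_ne_zero hx' hz), Complex.cpow_def_of_ne_zero hz,
    Complex.cpow_def_of_ne_zero hx', Complex.log_ofReal_mul hx hz, Complex.ofReal_log hx.le,
    ← Complex.exp_add]
  ring_nf

section ImaginaryRay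

variable {g : 𝓢(ℝ, ℂ)} {s ω : ℂ} {x : ℝ} (hω : ω.re = 0) (hω0 : ω ≠ 0)
include hω

theorem norm_mul_le_norm_ofReal_add (δ : ℝ) (hx : 0 < x) : ‖ω‖ * x ≤ ‖δ + ω * x‖ := by
  calc ‖ω‖ * x = |(δ + ω * x).im| := by
        simp [abs_mul, abs_of_pos hx, Complex.abs_im_eq_norm.2 hω]
    _ ≤ ‖δ + ω * x‖ := Complex.abs_im_le_norm _

include hω0

theorem ofReal_add_mul_mem_slitPlane (δ : ℝ) (hx : 0 < x) : δ + ω * x ∈ Complex.slitPlane := by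
  have him : ω.im ≠ 0 := fun h ↦ hω0 (Complex.ext hω h)
  exact Or.inr (by simpa using ⟨him, hx.ne'⟩)

theorem norm_ofReal_add_mul_cpow_le (δ : ℝ) (hx : 0 < x) (hs : 0 < s.re) :
    ‖(δ + ω * x) ^ (-s)‖ ≤ ‖ω‖ ^ (-s.re) * rexp (π * |s.im|) * ‖(x : ℂ) ^ (-s)‖ := by
  have hne := Complex.slitPlane_ne_zero (ofReal_add_mul_mem_slitPlane hω hω0 δ hx)
  have hexp : (rexp (Complex.arg (δ + ω * x) * (-s).im))⁻¹ ≤ rexp (π * |s.im|) := by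
    rw [← exp_neg, exp_le_exp, Complex.neg_im, mul_neg, neg_neg]
    refine (le_abs_self _).trans ?_
    rw [abs_mul]
    gcongr
    exact Complex.abs_arg_le_pi _
  have hnorm : ‖δ + ω * x‖ ^ (-s.re) ≤ (‖ω‖ * x) ^ (-s.re) :=
    rpow_le_rpow_of_nonpos (mul_pos (norm_pos_iff.2 hω0) hx) (norm_mul_le_norm_ofReal_add hω δ hx)
      (by linarith)
  rw [Complex.norm_cpow_of_ne_zero hne, Complex.norm_cpow_eq_rpow_re_of_pos hx, Complex.neg_re,
    div_eq_mul_inv, mul_right_comm, ← mul_rpow (norm_nonneg _) hx.le]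
  gcongr

theorem tendsto_integral_mul_ofReal_add_mul_cpow (hg : ∀ x ≤ 0, g x = 0) (hs : 0 < s.re) :
    Tendsto (fun δ : ℝ ↦ ∫ x in Ioi (0 : ℝ), g x * (δ + ω * x) ^ (-s)) (𝓝[>] 0)
      (𝓝 (∫ x in Ioi (0 : ℝ), g x * (ω * x) ^ (-s))) := by
  have hcont (δ x : ℝ) (hx : 0 < x) :
      ContinuousAt (fun p : ℝ × ℝ ↦ (p.1 + ω * p.2) ^ (-s)) (δ, x) :=
    ContinuousAt.cpow (by fun_prop) continuousAt_const
      (ofReal_add_mul_mem_slitPlane hω hω0 δ hx)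
  refine tendsto_integral_filter_of_dominated_convergence
    (fun x ↦ ‖ω‖ ^ (-s.re) * rexp (π * |s.im|) * ‖(x : ℂ) ^ (1 - s - 1) • g x‖)
    (.of_forall fun δ ↦ ?_) (.of_forall fun δ ↦ ?_)
    ((mellinConvergent_of_eq_zero hg (1 - s)).norm.const_mul _) ?_
  · refine ContinuousOn.aestronglyMeasurable (g.continuous.continuousOn.mul fun x hx ↦ ?_)
      measurableSet_Ioi
    exact ((hcont δ x hx).comp (f := fun x ↦ (δ, x)) (by fun_prop)).continuousWithinAt
  · filter_upwards [ae_restrict_mem measurableSet_Ioi] with x hx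
    rw [sub_sub_cancel_left, norm_mul, norm_smul, ← mul_assoc, mul_comm]
    gcongr
    exact norm_ofReal_add_mul_cpow_le hω hω0 δ hx hs
  · filter_upwards [ae_restrict_mem measurableSet_Ioi] with x hx
    have := (hcont 0 x hx).comp (f := fun δ ↦ (δ, x)) (x := 0) (by fun_prop)
    simpa using (this.tendsto.mono_left nhdsWithin_le_nhds).const_mul (g x)

end ImaginaryRay

section Laplace

variable {g H : 𝓢(ℝ, ℂ)} {s c ω : ℂ} (hH : IsLaplaceTransform g H ω) (hω : ω.re = 0)
include hH hω

theorem twistedMellin_mul_exp_eq_integral_macdonald {δ : ℝ} (hδ : 0 < δ)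
    (h : 0 < c.re ∨ 0 ≤ c.re ∧ 0 < s.re) :
    twistedMellin (fun u ↦ H u * Complex.exp (-(δ * u))) s c =
      ∫ x in Ioi (0 : ℝ), g x * macdonald s (δ + ω * x) c := by
  have hconv := (rapidlyDecaying_exp (a := δ) (by simpa using hδ)).mellinConvergent_twist h
  have hdouble : Integrable (Function.uncurry fun u x : ℝ ↦ Complex.exp (-(ω * x * u)) *
      ((u : ℂ) ^ (s - 1) • (Complex.exp (-(δ * u)) * Complex.exp (-c / u)) * g x))
      ((volume.restrict (Ioi 0)).prod (volume.restrict (Ioi 0))) := by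
    refine (Integrable.mul_prod hconv g.integrable.integrableOn).bdd_mul (c := 1)
      (Continuous.aestronglyMeasurable (by fun_prop)) (.of_forall fun p ↦ ?_)
    simp [Complex.norm_exp, hω]
  calc twistedMellin (fun u ↦ H u * Complex.exp (-(δ * u))) s c
    _ = ∫ u in Ioi (0 : ℝ), ∫ x in Ioi (0 : ℝ), Complex.exp (-(ω * x * u)) *
      ((u : ℂ) ^ (s - 1) • (Complex.exp (-(δ * u)) * Complex.exp (-c / u)) * g x) := by
        refine setIntegral_congr_fun measurableSet_Ioi fun u hu ↦ ?_
        simp only [hH u hu, smul_eq_mul, ← integral_mul_const, ← integral_const_mul]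
        congr 1 with x
        ring
    _ = ∫ x in Ioi (0 : ℝ), g x * macdonald s (δ + ω * x) c := by
        rw [integral_integral_swap hdouble]
        congr 1 with x
        rw [macdonald, twistedMellin, mellin, ← integral_const_mul]
        congr 1 with u
        rw [add_mul, neg_add, Complex.exp_add, smul_eq_mul, smul_eq_mul]
        ring

theorem tendsto_integral_mul_macdonald (h : 0 < c.re ∨ 0 ≤ c.re ∧ 0 < s.re) :
    Tendsto (fun δ : ℝ ↦ ∫ x in Ioi (0 : ℝ), g x * macdonald s (δ + ω * x) c) (𝓝[>] 0)
      (𝓝 (twistedMellin H s c)) :=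
  ((rapidlyDecaying_schwartz H).tendsto_twistedMellin_mul_exp h).congr'
    (eventually_nhdsWithin_of_forall fun _ hδ ↦
      twistedMellin_mul_exp_eq_integral_macdonald hH hω hδ h)

theorem mellin_eq_Gamma_mul_mellin_one_sub (hω0 : ω ≠ 0) (hg : ∀ x ≤ 0, g x = 0)
    (hs : 0 < s.re) : mellin H s = Complex.Gamma s * ω ^ (-s) * mellin g (1 - s) := by
  have hreg := tendsto_integral_mul_macdonald (s := s) (c := 0) hH hω (Or.inr ⟨le_rfl, hs⟩)
  have hlim : Tendsto (fun δ : ℝ ↦ ∫ x in Ioi (0 : ℝ), g x * macdonald s (δ + ω * x) 0) (𝓝[>] 0)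
      (𝓝 (∫ x in Ioi (0 : ℝ), g x * ((ω * x) ^ (-s) * Complex.Gamma s))) := by
    simp only [← mul_assoc, integral_mul_const]
    refine ((tendsto_integral_mul_ofReal_add_mul_cpow hω hω0 hg hs).mul_const _).congr'
      (eventually_nhdsWithin_of_forall fun δ (hδ : 0 < δ) ↦ ?_)
    have hre (x : ℝ) : 0 < (δ + ω * x).re := by simpa [hω] using hδ
    simp only [macdonald_zero_right (hre _) hs, ← mul_assoc, integral_mul_const]
  calc mellin H s
    _ = twistedMellin H s 0 := by simp [twistedMellin]
    _ = ∫ x in Ioi (0 : ℝ), g x * ((ω * x) ^ (-s) * Complex.Gamma s) :=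
      tendsto_nhds_unique hreg hlim
    _ = Complex.Gamma s * ω ^ (-s) * mellin g (1 - s) := by
      rw [mellin, ← integral_const_mul]
      refine setIntegral_congr_fun measurableSet_Ioi fun x hx ↦ ?_
      simp only [mul_ofReal_cpow hω0 hx, smul_eq_mul, sub_sub_cancel_left]
      ring

end Laplace

theorem two_pi_I_cpow_add (s : ℂ) :
    (2 * π * Complex.I) ^ (-s) + (-(2 * π * Complex.I)) ^ (-s) =
      2 * (2 * π : ℂ) ^ (-s) * Complex.cos (π * s / 2) := by
  have h2π : (0 : ℝ) < 2 * π := by positivity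
  have hpos := mul_ofReal_cpow Complex.I_ne_zero h2π (-s)
  have hneg := mul_ofReal_cpow (neg_ne_zero.2 Complex.I_ne_zero) h2π (-s)
  rw [Complex.cpow_def_of_ne_zero Complex.I_ne_zero, Complex.log_I] at hpos
  rw [Complex.cpow_def_of_ne_zero (neg_ne_zero.2 Complex.I_ne_zero), Complex.log_neg_I] at hneg
  push_cast at hpos hneg
  rw [mul_comm _ Complex.I, ← neg_mul, hpos, hneg, Complex.cos]
  ring_nf

theorem riemannZeta_mul_mellin_fourier_add {g : 𝓢(ℝ, ℂ)} {s : ℂ} (hg : ∀ x ≤ 0, g x = 0)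
    (hs : 1 < s.re) :
    riemannZeta s * (mellin (𝓕 g : 𝓢(ℝ, ℂ)) s + mellin (𝓕⁻ g : 𝓢(ℝ, ℂ)) s) =
      riemannZeta (1 - s) * mellin g (1 - s) := by
  have hs0 : 0 < s.re := one_pos.trans hs
  have hzeta : riemannZeta (1 - s) = 2 * (2 * π : ℂ) ^ (-s) * Complex.Gamma s *
      Complex.cos (π * s / 2) * riemannZeta s := by
    refine riemannZeta_one_sub (fun n hn ↦ ?_) (by rintro rfl; simp at hs)
    rw [hn, Complex.neg_re, Complex.natCast_re, neg_pos] at hs0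
    exact hs0.not_ge n.cast_nonneg
  rw [mellin_eq_Gamma_mul_mellin_one_sub (isLaplaceTransform_fourier hg) (by simp) (by simp) hg hs0,
    mellin_eq_Gamma_mul_mellin_one_sub (isLaplaceTransform_fourierInv hg) (by simp) (by simp) hg
      hs0, hzeta]
  linear_combination riemannZeta s * Complex.Gamma s * mellin g (1 - s) * two_pi_I_cpow_add s

/-! ### Continuation to `s = 0` -/

section DualSum

variable (H : 𝓢(ℝ, ℂ)) {q : ℕ} (a : ℤ)

theorem differentiableAt_dualPair (n : ℕ) {s : ℂ} (hs : -2 < s.re) :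
    DifferentiableAt ℂ (fun s ↦ dualPair H q a s n) s := by
  have hE (x : ℝ) : DifferentiableAt ℂ (fun s ↦ twistedMellinExt H s (2 * π * Complex.I * x)) s :=
    differentiableAt_twistedMellinExt H (two_pi_I_mul_ofReal_re x).ge hs
  exact ((hE _).const_mul _).fun_add ((hE _).const_mul _)

theorem differentiableOn_divisorSum_dualPair :
    DifferentiableOn ℂ (fun s ↦ divisorSum (dualPair H q a s) s) {s | 0 < s.re} := by
  refine differentiableOn_of_locally_differentiableOn fun s _ ↦
    ⟨Metric.ball 0 (‖s‖ + 1), Metric.isOpen_ball, by simp, ?_⟩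
  obtain ⟨C, hC⟩ := exists_norm_dualPair_le (q := q) H a (R := ‖s‖ + 1) (by positivity)
  refine differentiableOn_divisorSum (C := C)
    ((isOpen_lt continuous_const Complex.continuous_re).inter Metric.isOpen_ball)
    (fun z hz ↦ hz.1.le) (fun n z hz ↦ ?_)
    fun z hz n ↦ hC z hz.1.le (mem_ball_zero_iff.1 hz.2).le n
  have hre : -2 < z.re := by linarith [hz.1.out]
  exact (differentiableAt_dualPair H a n hre).differentiableWithinAt

theorem continuousOn_divisorSum_dualPair :
    ContinuousOn (fun s ↦ divisorSum (dualPair H q a s) s) {s | 0 ≤ s.re} := by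
  refine continuousOn_of_locally_continuousOn fun s _ ↦
    ⟨Metric.ball 0 (‖s‖ + 1), Metric.isOpen_ball, by simp, ?_⟩
  obtain ⟨C, hC⟩ := exists_norm_dualPair_le (q := q) H a (R := ‖s‖ + 1) (by positivity)
  refine continuousOn_divisorSum (C := C) (fun z hz ↦ hz.1) (fun n z hz ↦ ?_)
    fun z hz n ↦ hC z hz.1 (mem_ball_zero_iff.1 hz.2).le n
  have hre : -2 < z.re := by linarith [hz.1.out]
  exact (differentiableAt_dualPair H a n hre).continuousAt.continuousWithinAt

end DualSum

theorem tendsto_riemannZeta_one_add_sub_inv :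
    Tendsto (fun s ↦ riemannZeta (1 + s) - s⁻¹) (𝓝[≠] 0) (𝓝 eulerMascheroniConstant) := by
  have hshift : Tendsto (fun s : ℂ ↦ 1 + s) (𝓝[≠] 0) (𝓝[≠] 1) := by
    refine tendsto_nhdsWithin_iff.2
      ⟨?_, eventually_nhdsWithin_of_forall fun s hs ↦ by simpa using hs⟩
    exact Continuous.tendsto' (by fun_prop) _ _ (by simp) |>.mono_left nhdsWithin_le_nhds
  simpa [Function.comp_def] using tendsto_riemannZeta_sub_one_div.comp hshift

-- The poles of the two zeta factors at `s = 0` cancel.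
theorem tendsto_mul_riemannZeta_one_add_add_mul_riemannZeta_one_sub {A B : ℂ → ℂ} {A' B' : ℂ}
    (hA : HasDerivAt A A' 0) (hB : HasDerivAt B B' 0) (hAB : A 0 = B 0) :
    Tendsto (fun s ↦ A s * riemannZeta (1 + s) + B s * riemannZeta (1 - s)) (𝓝[≠] 0)
      (𝓝 (2 * eulerMascheroniConstant * A 0 + (A' - B'))) := by
  have hneg : Tendsto (fun s : ℂ ↦ -s) (𝓝[≠] 0) (𝓝[≠] 0) := by
    refine tendsto_nhdsWithin_iff.2
      ⟨?_, eventually_nhdsWithin_of_forall fun s hs ↦ by simpa using hs⟩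
    exact Continuous.tendsto' (by fun_prop) _ _ (by simp) |>.mono_left nhdsWithin_le_nhds
  have hcont {D : ℂ → ℂ} {D' : ℂ} (hD : HasDerivAt D D' 0) : Tendsto D (𝓝[≠] 0) (𝓝 (D 0)) :=
    hD.continuousAt.tendsto.mono_left nhdsWithin_le_nhds
  have hplus := (hcont hA).mul tendsto_riemannZeta_one_add_sub_inv
  have hminus := (hcont hB).mul (tendsto_riemannZeta_one_add_sub_inv.comp hneg)
  have hslope := (hA.fun_sub hB).tendsto_slope_zero
  refine (((hplus.add hminus).add hslope).congr fun s ↦ ?_).trans_eq ?_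
  · simp only [Function.comp_apply, zero_add, hAB, smul_eq_mul, sub_self, sub_zero, inv_neg,
      ← sub_eq_add_neg]
    ring
  · rw [hAB]
    ring_nf

section Polar

variable {g : 𝓢(ℝ, ℂ)} {q : ℕ} {d b : ℤ}

theorem fourier_zero_eq_mellin_one (hg : ∀ x ≤ 0, g x = 0) : 𝓕 g 0 = mellin g 1 := by
  have h := setIntegral_Ioi_mul_eq_integral hg fun _ ↦ 1
  simp only [mul_one] at h
  simp [fourier_schwartz_apply, mellin, h]

theorem hasDerivAt_natCast_cpow_mul_sub_one (hq : 0 < q) (c : ℂ) :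
    HasDerivAt (fun s : ℂ ↦ (q : ℂ) ^ (c * s - 1)) (c * (log q / q)) 0 := by
  have hlin : HasDerivAt (fun s : ℂ ↦ c * s - 1) c 0 := by
    simpa using ((hasDerivAt_id (0 : ℂ)).const_mul c).sub_const 1
  refine (hlin.const_cpow (.inl (mod_cast hq.ne'))).congr_deriv ?_
  simp only [mul_zero, zero_sub, Complex.cpow_neg_one, Complex.natCast_log]
  ring

theorem mellin_log_smul_one_add (hg : ∀ x ≤ 0, g x = 0) (c : ℝ) :
    mellin (fun t ↦ log t • g t) 1 + c * mellin g 1 =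
      ∫ x in Ioi (0 : ℝ), ((log x + c : ℝ) : ℂ) * g x := by
  have hlog := (hasDerivAt_mellin_of_eq_zero hg 1).1
  have hconv := mellinConvergent_of_eq_zero hg 1
  simp only [MellinConvergent, sub_self, Complex.cpow_zero, one_smul] at hlog hconv
  simp only [mellin, sub_self, Complex.cpow_zero, one_smul]
  rw [← integral_const_mul, ← integral_add hlog (hconv.const_mul _)]
  congr 1 with x
  rw [Complex.real_smul, Complex.ofReal_add, add_mul]

theorem tendsto_polar_terms (hg : ∀ x ≤ 0, g x = 0) (hq : 0 < q) :
    Tendsto (fun s : ℂ ↦ (q : ℂ) ^ (-s - 1) * (riemannZeta (1 + s) * 𝓕 g 0) +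
        (q : ℂ) ^ (s - 1) * (riemannZeta (1 - s) * mellin g (1 - s))) (𝓝[≠] 0)
      (𝓝 (1 / q * ∫ x in Ioi (0 : ℝ),
        ((log x + (2 * eulerMascheroniConstant - 2 * log q) : ℝ) : ℂ) * g x)) := by
  have hmellin : HasDerivAt (fun s ↦ mellin g (1 - s)) (-mellin (fun t ↦ log t • g t) 1) 0 := by
    simpa using HasDerivAt.comp_const_sub (1 : ℂ) 0 (by
      simpa using (hasDerivAt_mellin_of_eq_zero hg 1).2)
  have hA := (hasDerivAt_natCast_cpow_mul_sub_one hq (-1)).mul_const (mellin g 1)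
  have hB := (hasDerivAt_natCast_cpow_mul_sub_one hq 1).fun_mul hmellin
  refine ((tendsto_mul_riemannZeta_one_add_add_mul_riemannZeta_one_sub hA hB
    (by simp)).congr fun s ↦ ?_).trans_eq ?_
  · rw [fourier_zero_eq_mellin_one hg, neg_one_mul, one_mul]
    ring
  · rw [← mellin_log_smul_one_add hg]
    simp only [mul_zero, zero_sub, Complex.cpow_neg_one, sub_zero]
    push_cast
    ring_nf

theorem divisorSum_eq_of_re_pos (hg : ∀ x ≤ 0, g x = 0) (hq : 0 < q)
    (hb : (q : ℤ) ∣ d * b - 1) {s : ℂ} (hs : 0 < s.re) :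
    divisorSum (fun n ↦ e2pi (n * d / q) * g n) s =
      (q : ℂ) ^ (-s - 1) * (riemannZeta (1 + s) * 𝓕 g 0) +
        (q : ℂ) ^ (s - 1) * (riemannZeta (1 - s) * mellin g (1 - s)) + (q : ℂ) ^ (s - 1) *
          (divisorSum (dualPair (𝓕 g) q (-b) s) s + divisorSum (dualPair (𝓕⁻ g) q b s) s) := by
  have hqc : (q : ℂ) ≠ 0 := mod_cast hq.ne'
  have hopen : IsOpen {s : ℂ | 0 < s.re} := isOpen_lt continuous_const Complex.continuous_re
  have hpow (c : ℂ) : DifferentiableOn ℂ (fun s ↦ (q : ℂ) ^ (c * s - 1)) {s | 0 < s.re} :=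
    (Differentiable.const_cpow (by fun_prop) (.inl hqc)).differentiableOn
  have hzeta {c : ℂ} (hc : c ≠ 0) :
      DifferentiableOn ℂ (fun s ↦ riemannZeta (1 + c * s)) {s | 0 < s.re} := fun s hs ↦ by
    have hs0 : s ≠ 0 := fun h ↦ by simp [h] at hs
    exact ((differentiableAt_riemannZeta (by simp [hc, hs0])).comp s
      (by fun_prop)).differentiableWithinAt
  have hmellin : Differentiable ℂ fun s ↦ mellin g (1 - s) := fun s ↦
    (hasDerivAt_mellin_of_eq_zero hg (1 - s)).2.differentiableAt.comp s (by fun_prop)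
  have hplus :=
    (hpow 1).fun_mul ((hzeta (neg_ne_zero.2 one_ne_zero)).fun_mul hmellin.differentiableOn)
  have hminus := (hpow (-1)).fun_mul ((hzeta one_ne_zero).mul_const (𝓕 g 0))
  have hdual := (hpow 1).fun_mul <|
    (differentiableOn_divisorSum_dualPair (q := q) (𝓕 g) (-b)).fun_add
      (differentiableOn_divisorSum_dualPair (q := q) (𝓕⁻ g) b)
  obtain ⟨C, hC⟩ := exists_norm_e2pi_mul_le g q d
  have hleft := differentiableOn_divisorSum (F := fun _ n ↦ e2pi (n * d / q) * g n) hopen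
    (fun s hs ↦ hs.le) (fun n ↦ differentiableOn_const _) fun s _ ↦ hC
  have hright := (hminus.fun_add hplus).fun_add hdual
  simp only [neg_one_mul, one_mul, ← sub_eq_add_neg] at hright
  refine eqOn_re_pos_of_eventually_eq_ofReal hleft hright ?_ hs
  filter_upwards [eventually_gt_atTop 2] with x hx
  rw [divisorSum_eq_of_two_lt_re g hg hq hb (by simpa using hx),
    riemannZeta_mul_mellin_fourier_add hg (by simpa using one_lt_two.trans hx)]
  ring

theorem divisorSum_zero_eq (hg : ∀ x ≤ 0, g x = 0) (hq : 0 < q) (hb : (q : ℤ) ∣ d * b - 1) :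
    divisorSum (fun n ↦ e2pi (n * d / q) * g n) 0 =
      1 / q * (∫ x in Ioi (0 : ℝ),
        ((log x + (2 * eulerMascheroniConstant - 2 * log q) : ℝ) : ℂ) * g x) +
      1 / q * (divisorSum (dualPair (𝓕 g) q (-b) 0) 0 + divisorSum (dualPair (𝓕⁻ g) q b 0) 0) := by
  have hzero : (0 : ℂ) ∈ {s : ℂ | 0 ≤ s.re} := le_refl (0 : ℝ)
  have : (𝓝[{s : ℂ | 0 < s.re}] 0).NeBot :=
    mem_closure_iff_nhdsWithin_neBot.1 (by rw [Complex.closure_setOfPred_lt_re]; exact hzero)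
  have hne : 𝓝[{s : ℂ | 0 < s.re}] 0 ≤ 𝓝[≠] 0 := nhdsWithin_mono _ fun s hs h ↦ by
    simp [mem_singleton_iff.1 h] at hs
  have hle : 𝓝[{s : ℂ | 0 < s.re}] 0 ≤ 𝓝[{s : ℂ | 0 ≤ s.re}] 0 :=
    nhdsWithin_mono _ fun s (hs : 0 < s.re) ↦ hs.le
  obtain ⟨C, hC⟩ := exists_norm_e2pi_mul_le g q d
  have hleft : ContinuousOn (divisorSum fun n ↦ e2pi (n * d / q) * g n) {s | 0 ≤ s.re} :=
    continuousOn_divisorSum (fun s hs ↦ hs) (fun n ↦ continuousOn_const) fun s _ ↦ hC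
  have hpow : Tendsto (fun s : ℂ ↦ (q : ℂ) ^ (s - 1)) (𝓝[{s | 0 < s.re}] 0) (𝓝 (1 / q)) := by
    have h := (hasDerivAt_natCast_cpow_mul_sub_one hq 1).continuousAt.tendsto
    simp only [one_mul, zero_sub, Complex.cpow_neg_one, ← one_div] at h
    exact h.mono_left nhdsWithin_le_nhds
  have hdual (H : 𝓢(ℝ, ℂ)) (a : ℤ) :=
    (continuousOn_divisorSum_dualPair (q := q) H a 0 hzero).mono_left hle
  refine tendsto_nhds_unique ((hleft 0 hzero).mono_left hle)
    ((((tendsto_polar_terms hg hq).mono_left hne).add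
      (hpow.mul ((hdual (𝓕 g) (-b)).add (hdual (𝓕⁻ g) b)))).congr' ?_)
  filter_upwards [self_mem_nhdsWithin] with s hs
  exact (divisorSum_eq_of_re_pos hg hq hb hs).symm

end Polar

/-! ### The Bessel kernels -/

theorem ofReal_besselJ0 (z : ℝ) : (besselJ0 z : ℂ) = besselSeries (-(z / 2) ^ 2) := by
  rw [besselJ0, besselSeries, powerSum, Complex.ofReal_tsum]
  refine tsum_congr fun k ↦ ?_
  rw [besselCoeff, neg_pow ((z / 2 : ℂ) ^ 2), pow_mul]
  push_cast
  ring

theorem ofReal_besselI0 (z : ℝ) : (besselI0 z : ℂ) = besselSeries ((z / 2) ^ 2) := by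
  rw [besselI0, besselSeries, powerSum, Complex.ofReal_tsum]
  refine tsum_congr fun k ↦ ?_
  rw [besselCoeff, pow_mul]
  push_cast
  ring

theorem harmonicBesselSeries_eq_tsum_succ (w : ℂ) :
    harmonicBesselSeries w = ∑' k, harmonicBesselCoeff (k + 1) * w ^ (k + 1) := by
  rw [harmonicBesselSeries, powerSum, (summable_mul_pow_of_norm_le_inv_factorial
    norm_harmonicBesselCoeff_le w).tsum_eq_zero_add]
  simp [harmonicBesselCoeff, Hk]

theorem ofReal_besselY0 (z : ℝ) : (besselY0 z : ℂ) =
    2 / π * ((log (z / 2) + eulerMascheroniConstant) * besselSeries (-(z / 2) ^ 2)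
      - harmonicBesselSeries (-(z / 2) ^ 2)) := by
  have hsum : ((∑' k : ℕ, (-1) ^ k * Hk (k + 1) * (z / 2) ^ (2 * (k + 1)) /
      ((k + 1).factorial : ℝ) ^ 2 : ℝ) : ℂ) = -harmonicBesselSeries (-(z / 2) ^ 2) := by
    rw [harmonicBesselSeries_eq_tsum_succ, Complex.ofReal_tsum, ← tsum_neg]
    refine tsum_congr fun k ↦ ?_
    rw [harmonicBesselCoeff, besselCoeff, neg_pow ((z / 2 : ℂ) ^ 2), pow_mul]
    push_cast
    ring
  rw [besselY0, Complex.ofReal_mul, Complex.ofReal_add, hsum, Complex.ofReal_mul, ofReal_besselJ0]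
  push_cast
  ring

theorem ofReal_besselK0 (z : ℝ) : (besselK0 z : ℂ) =
    -(log (z / 2) + eulerMascheroniConstant) * besselSeries ((z / 2) ^ 2)
      + harmonicBesselSeries ((z / 2) ^ 2) := by
  have hsum : ((∑' k : ℕ, Hk (k + 1) * (z / 2) ^ (2 * (k + 1)) /
      ((k + 1).factorial : ℝ) ^ 2 : ℝ) : ℂ) = harmonicBesselSeries ((z / 2) ^ 2) := by
    rw [harmonicBesselSeries_eq_tsum_succ, Complex.ofReal_tsum]
    refine tsum_congr fun k ↦ ?_
    rw [harmonicBesselCoeff, besselCoeff, pow_mul]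
    push_cast
    ring
  rw [besselK0, Complex.ofReal_add, hsum, Complex.ofReal_mul, ofReal_besselI0]
  push_cast
  ring

/-- The continuation of `macdonald 0` to the slit plane in both variables, by its logarithmic
power series. On the imaginary axes it produces both `Y₀` and `K₀`. -/
def macdonaldKernel (a c : ℂ) : ℂ := macdonaldSeries (Complex.log a + Complex.log c) (a * c)

section ImaginaryAxes

variable {u v : ℝ}

theorem log_ofReal_mul_I (hu : 0 < u) :
    Complex.log (u * Complex.I) = log u + π / 2 * Complex.I := by
  rw [Complex.log_ofReal_mul hu Complex.I_ne_zero, Complex.log_I]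

theorem log_neg_ofReal_mul_I (hu : 0 < u) :
    Complex.log (-(u * Complex.I)) = log u - π / 2 * Complex.I := by
  rw [← mul_neg, Complex.log_ofReal_mul hu (neg_ne_zero.2 Complex.I_ne_zero), Complex.log_neg_I]
  ring

theorem ofReal_log_two_mul_sqrt_div_two (hu : 0 < u) (hv : 0 < v) :
    (log (2 * √(u * v) / 2) : ℂ) = (log u + log v) / 2 := by
  rw [mul_div_cancel_left₀ _ two_ne_zero, log_sqrt (mul_pos hu hv).le, log_mul hu.ne' hv.ne']
  push_cast
  ring

theorem ofReal_two_mul_sqrt_div_two_sq (hu : 0 < u) (hv : 0 < v) :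
    (((2 * √(u * v) : ℝ) : ℂ) / 2) ^ 2 = u * v := by
  rw [Complex.ofReal_mul, Complex.ofReal_ofNat, mul_div_cancel_left₀ _ two_ne_zero,
    ← Complex.ofReal_pow, sq_sqrt (mul_pos hu hv).le, Complex.ofReal_mul]

theorem macdonaldKernel_I_I_add (hu : 0 < u) (hv : 0 < v) :
    macdonaldKernel (u * Complex.I) (v * Complex.I) +
      macdonaldKernel (-(u * Complex.I)) (-(v * Complex.I)) =
        -(2 * π) * besselY0 (2 * √(u * v)) := by
  have hπ : (π : ℂ) ≠ 0 := Complex.ofReal_ne_zero.2 pi_ne_zero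
  have harg : u * Complex.I * (v * Complex.I) = (-(u * v) : ℂ) := by
    linear_combination (u * v : ℂ) * Complex.I_sq
  rw [ofReal_besselY0, ofReal_log_two_mul_sqrt_div_two hu hv, ofReal_two_mul_sqrt_div_two_sq hu hv,
    macdonaldKernel, macdonaldKernel, neg_mul_neg, harg, log_ofReal_mul_I hu, log_ofReal_mul_I hv,
    log_neg_ofReal_mul_I hu, log_neg_ofReal_mul_I hv, macdonaldSeries, macdonaldSeries]
  field_simp
  ring

theorem macdonaldKernel_I_neg_I_add (hu : 0 < u) (hv : 0 < v) :
    macdonaldKernel (u * Complex.I) (-(v * Complex.I)) +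
      macdonaldKernel (-(u * Complex.I)) (v * Complex.I) = 4 * besselK0 (2 * √(u * v)) := by
  have harg : -(u * Complex.I) * (v * Complex.I) = (u * v : ℂ) := by
    linear_combination -(u * v : ℂ) * Complex.I_sq
  rw [ofReal_besselK0, ofReal_log_two_mul_sqrt_div_two hu hv, ofReal_two_mul_sqrt_div_two_sq hu hv,
    macdonaldKernel, macdonaldKernel, ← neg_mul_comm, harg, log_ofReal_mul_I hu,
    log_ofReal_mul_I hv, log_neg_ofReal_mul_I hu, log_neg_ofReal_mul_I hv, macdonaldSeries,
    macdonaldSeries]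
  ring

end ImaginaryAxes

theorem continuous_macdonaldSeries : Continuous fun p : ℂ × ℂ ↦ macdonaldSeries p.1 p.2 := by
  have hP := differentiable_besselSeries.continuous
  have hQ := differentiable_harmonicBesselSeries.continuous
  unfold macdonaldSeries
  fun_prop

theorem continuousAt_macdonaldKernel {a c : ℂ} (ha : a ∈ Complex.slitPlane)
    (hc : c ∈ Complex.slitPlane) :
    ContinuousAt (fun p : ℂ × ℂ ↦ macdonaldKernel p.1 p.2) (a, c) :=
  continuous_macdonaldSeries.continuousAt.comp₂
    ((continuousAt_fst.clog ha).add (continuousAt_snd.clog hc))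
    (continuousAt_fst.mul continuousAt_snd)

theorem exists_norm_macdonaldSeries_le (R : ℝ) :
    ∃ M, 0 ≤ M ∧ ∀ L w : ℂ, ‖w‖ ≤ R → ‖macdonaldSeries L w‖ ≤ M * (1 + ‖L‖) := by
  obtain ⟨P, hP⟩ := (isCompact_closedBall (0 : ℂ) R).exists_bound_of_continuousOn
    differentiable_besselSeries.continuous.continuousOn
  obtain ⟨Q, hQ⟩ := (isCompact_closedBall (0 : ℂ) R).exists_bound_of_continuousOn
    differentiable_harmonicBesselSeries.continuous.continuousOn
  set γ : ℂ := 2 * eulerMascheroniConstant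
  refine ⟨(1 + ‖γ‖) * |P| + 2 * |Q|, by positivity, fun L w hw ↦ ?_⟩
  have hw : w ∈ Metric.closedBall 0 R := by simpa using hw
  have hL : ‖L + γ‖ ≤ (1 + ‖γ‖) * (1 + ‖L‖) := by
    nlinarith [norm_add_le L γ, norm_nonneg L, norm_nonneg γ]
  calc ‖macdonaldSeries L w‖
      ≤ ‖L + γ‖ * ‖besselSeries w‖ + 2 * ‖harmonicBesselSeries w‖ := by
        refine (norm_add_le _ _).trans_eq ?_
        rw [norm_mul, norm_mul, norm_neg, Complex.norm_ofNat]
    _ ≤ (1 + ‖γ‖) * (1 + ‖L‖) * |P| + 2 * |Q| := by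
        gcongr
        exacts [(hP w hw).trans (le_abs_self P), (hQ w hw).trans (le_abs_self Q)]
    _ ≤ ((1 + ‖γ‖) * |P| + 2 * |Q|) * (1 + ‖L‖) := by
        nlinarith [mul_nonneg (abs_nonneg Q) (norm_nonneg L)]

theorem norm_log_le {a : ℂ} {x A : ℝ} (hx : 0 < x) (hxa : x ≤ ‖a‖) (haA : ‖a‖ ≤ A) :
    ‖Complex.log a‖ ≤ |log x| + |log A| + π := by
  have hlog : |log ‖a‖| ≤ |log x| + |log A| := by
    rw [abs_le]
    constructor
    · linarith [log_le_log hx hxa, neg_abs_le (log x), abs_nonneg (log A)]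
    · linarith [log_le_log (hx.trans_le hxa) haA, le_abs_self (log A), abs_nonneg (log x)]
  calc ‖Complex.log a‖ ≤ |(Complex.log a).re| + |(Complex.log a).im| :=
        Complex.norm_le_abs_re_add_abs_im _
    _ ≤ |log x| + |log A| + π := by
      rw [Complex.log_re, Complex.log_im]
      exact add_le_add hlog (Complex.abs_arg_le_pi a)

section KernelIntegral

variable {g : 𝓢(ℝ, ℂ)} {ω : ℂ} (hω : ω.re = 0) (hω0 : ω ≠ 0)

theorem integrableOn_norm_add_norm_log_smul (hg : ∀ x ≤ 0, g x = 0) :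
    IntegrableOn (fun x ↦ ‖g x‖ + ‖log x • g x‖) (Ioi 0) := by
  have hlog : IntegrableOn (fun x ↦ log x • g x) (Ioi 0) := by
    simpa [MellinConvergent] using (hasDerivAt_mellin_of_eq_zero hg 1).1
  exact g.integrable.norm.integrableOn.add hlog.norm

include hω hω0

theorem exists_norm_mul_macdonaldKernel_le (hgc : HasCompactSupport g) (R : ℝ) :
    ∃ K, ∀ (δ : ℝ) (c : ℂ) (x : ℝ), |δ| ≤ R → ‖c‖ ≤ R → ‖Complex.log c‖ ≤ R → 0 < x →
      ‖g x * macdonaldKernel (δ + ω * x) c‖ ≤ K * (‖g x‖ + ‖log x • g x‖) := by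
  obtain ⟨X, hX⟩ := hgc.isCompact.bddAbove
  obtain ⟨M, hM, hS⟩ := exists_norm_macdonaldSeries_le ((R + ‖ω‖ * X) * R)
  set B := |log ‖ω‖| + |log (R + ‖ω‖ * X)| + π + |R|
  refine ⟨M * (1 + B), fun δ c x hδ hc hlogc hx ↦ ?_⟩
  by_cases hgx : g x = 0
  · simp [hgx]
  have hle : ‖δ + ω * x‖ ≤ R + ‖ω‖ * X := by
    refine (norm_add_le _ _).trans ?_
    rw [norm_mul, Complex.norm_real, Complex.norm_real, norm_of_nonneg hx.le]
    gcongr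
    exacts [hδ, hX (subset_tsupport _ hgx)]
  have hlog : ‖Complex.log (δ + ω * x) + Complex.log c‖ ≤ |log x| + B := by
    have hωpos : 0 < ‖ω‖ := norm_pos_iff.2 hω0
    have := norm_log_le (mul_pos hωpos hx) (norm_mul_le_norm_ofReal_add hω δ hx) hle
    rw [log_mul hωpos.ne' hx.ne'] at this
    linarith [norm_add_le (Complex.log (δ + ω * x)) (Complex.log c), abs_add_le (log ‖ω‖) (log x),
      le_abs_self R]
  have hB0 : 0 ≤ B := by positivity
  have hker : ‖macdonaldKernel (δ + ω * x) c‖ ≤ M * (1 + (|log x| + B)) := by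
    refine (hS _ _ ?_).trans (by gcongr)
    rw [norm_mul]
    gcongr
    exact (norm_nonneg _).trans hle
  calc ‖g x * macdonaldKernel (δ + ω * x) c‖ ≤ ‖g x‖ * (M * ((1 + B) * (1 + |log x|))) := by
        rw [norm_mul]
        gcongr
        refine hker.trans ?_
        gcongr
        nlinarith [abs_nonneg (log x)]
    _ = M * (1 + B) * (‖g x‖ + ‖log x • g x‖) := by
        rw [norm_smul, norm_eq_abs]
        ring

theorem continuousAt_macdonaldKernel_ray {c : ℂ} {x : ℝ} (δ : ℝ) (hc : c ∈ Complex.slitPlane)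
    (hx : 0 < x) :
    ContinuousAt (fun p : (ℝ × ℂ) × ℝ ↦ macdonaldKernel (p.1.1 + ω * p.2) p.1.2) ((δ, c), x) :=
  (continuousAt_macdonaldKernel (ofReal_add_mul_mem_slitPlane hω hω0 δ hx) hc).comp₂
    (x := ((δ, c), x)) (g := fun p : (ℝ × ℂ) × ℝ ↦ (p.1.1 + ω * p.2 : ℂ)) (h := fun p ↦ p.1.2)
    (by fun_prop) (by fun_prop)

theorem aestronglyMeasurable_mul_macdonaldKernel {c : ℂ} (δ : ℝ) (hc : c ∈ Complex.slitPlane) :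
    AEStronglyMeasurable (fun x : ℝ ↦ g x * macdonaldKernel (δ + ω * x) c)
      (volume.restrict (Ioi 0)) := by
  refine ContinuousOn.aestronglyMeasurable (fun x hx ↦ ?_) measurableSet_Ioi
  have hkernel : ContinuousAt (fun x : ℝ ↦ macdonaldKernel (δ + ω * x) c) x :=
    (continuousAt_macdonaldKernel_ray hω hω0 δ hc hx).comp
      (f := fun x : ℝ ↦ ((δ, c), x)) (by fun_prop)
  exact (g.continuous.continuousAt.fun_mul hkernel).continuousWithinAt

theorem integrableOn_mul_macdonaldKernel {c : ℂ} (hg : ∀ x ≤ 0, g x = 0)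
    (hgc : HasCompactSupport g) (hc : c ∈ Complex.slitPlane) :
    IntegrableOn (fun x : ℝ ↦ g x * macdonaldKernel (ω * x) c) (Ioi 0) := by
  obtain ⟨K, hK⟩ := exists_norm_mul_macdonaldKernel_le hω hω0 hgc (max ‖c‖ ‖Complex.log c‖)
  refine ((integrableOn_norm_add_norm_log_smul hg).const_mul K).mono'
    (by simpa using aestronglyMeasurable_mul_macdonaldKernel hω hω0 0 hc) ?_
  filter_upwards [ae_restrict_mem measurableSet_Ioi] with x hx
  simpa using hK 0 c x (by simp) (le_max_left _ _) (le_max_right _ _) hx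

theorem continuousAt_integral_mul_macdonaldKernel {c : ℂ} (hg : ∀ x ≤ 0, g x = 0)
    (hgc : HasCompactSupport g) (hc : c ∈ Complex.slitPlane) :
    ContinuousAt (fun p : ℝ × ℂ ↦ ∫ x in Ioi (0 : ℝ), g x * macdonaldKernel (p.1 + ω * x) p.2)
      (0, c) := by
  have hnorm : Tendsto (fun p : ℝ × ℂ ↦ |p.1| + ‖p.2‖ + ‖Complex.log p.2‖) (𝓝 (0, c))
      (𝓝 (|0| + ‖c‖ + ‖Complex.log c‖)) :=
    ContinuousAt.add (by fun_prop) (continuousAt_snd.clog hc).norm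
  obtain ⟨R, hR⟩ := exists_gt (|0| + ‖c‖ + ‖Complex.log c‖)
  obtain ⟨K, hK⟩ := exists_norm_mul_macdonaldKernel_le (g := g) hω hω0 hgc R
  refine continuousAt_of_dominated ?_ ?_ ((integrableOn_norm_add_norm_log_smul hg).const_mul K) ?_
  · filter_upwards [continuousAt_snd.preimage_mem_nhds (Complex.isOpen_slitPlane.mem_nhds hc)]
      with p hp using aestronglyMeasurable_mul_macdonaldKernel hω hω0 p.1 hp
  · filter_upwards [hnorm.eventually_lt_const hR] with p hp
    filter_upwards [ae_restrict_mem measurableSet_Ioi] with x hx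
    have := abs_nonneg p.1
    have := norm_nonneg p.2
    have := norm_nonneg (Complex.log p.2)
    exact hK p.1 p.2 x (by linarith) (by linarith) (by linarith) hx
  · filter_upwards [ae_restrict_mem measurableSet_Ioi] with x hx
    exact continuousAt_const.mul ((continuousAt_macdonaldKernel_ray hω hω0 0 hc hx).comp
      (f := fun p : ℝ × ℂ ↦ (p, x)) (by fun_prop))

end KernelIntegral

theorem mem_slitPlane_of_re_nonneg {c : ℂ} (hc : 0 ≤ c.re) (hc0 : c ≠ 0) :
    c ∈ Complex.slitPlane :=
  hc.lt_or_eq.imp id fun h him ↦ hc0 (Complex.ext h.symm him)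

section Transform

variable {g H : 𝓢(ℝ, ℂ)} {ω c : ℂ} (hH : IsLaplaceTransform g H ω) (hω : ω.re = 0) (hω0 : ω ≠ 0)
  (hg : ∀ x ≤ 0, g x = 0) (hgc : HasCompactSupport g)
include hH hω hω0 hg hgc

theorem twistedMellin_zero_eq_integral (hc : 0 < c.re) :
    twistedMellin H 0 c = ∫ x in Ioi (0 : ℝ), g x * macdonaldKernel (ω * x) c := by
  have hcont : Tendsto (fun δ : ℝ ↦ ∫ x in Ioi (0 : ℝ), g x * macdonaldKernel (δ + ω * x) c)
      (𝓝[>] 0) (𝓝 (∫ x in Ioi (0 : ℝ), g x * macdonaldKernel (ω * x) c)) := by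
    have h := (continuousAt_integral_mul_macdonaldKernel hω hω0 hg hgc (.inl hc)).comp
      (f := fun δ : ℝ ↦ (δ, c)) (x := 0) (by fun_prop)
    simpa [Function.comp_def] using h.tendsto.mono_left nhdsWithin_le_nhds
  refine tendsto_nhds_unique (tendsto_integral_mul_macdonald hH hω (.inl hc)) (hcont.congr' ?_)
  filter_upwards [self_mem_nhdsWithin] with δ (hδ : 0 < δ)
  refine integral_congr_ae (.of_forall fun x ↦ ?_)
  simp only [macdonaldKernel, macdonald_zero (a := δ + ω * x) (by simpa [hω] using hδ) hc]

theorem twistedMellinExt_zero_eq_integral (hc : 0 ≤ c.re) (hc0 : c ≠ 0) :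
    twistedMellinExt H 0 c = ∫ x in Ioi (0 : ℝ), g x * macdonaldKernel (ω * x) c := by
  have hcont : ContinuousOn (fun c ↦ ∫ x in Ioi (0 : ℝ), g x * macdonaldKernel (ω * x) c)
      {c | 0 ≤ c.re ∧ c ≠ 0} := fun c hc ↦ by
    have hslit := mem_slitPlane_of_re_nonneg hc.1 hc.2
    have h := (continuousAt_integral_mul_macdonaldKernel hω hω0 hg hgc hslit).comp
      (f := fun c : ℂ ↦ ((0 : ℝ), c)) (x := c) (by fun_prop)
    simpa [Function.comp_def] using h.continuousWithinAt
  have heq : EqOn (twistedMellinExt H 0)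
      (fun c ↦ ∫ x in Ioi (0 : ℝ), g x * macdonaldKernel (ω * x) c) {c | 0 < c.re} :=
    fun c (hc : 0 < c.re) ↦ by
      rw [← twistedMellin_eq_twistedMellinExt H (by rintro rfl; simp at hc) (.inl hc),
        twistedMellin_zero_eq_integral hH hω hω0 hg hgc hc]
  refine heq.of_subset_closure (continuousOn_twistedMellinExt H (by simp)) hcont
    (fun c (hc : 0 < c.re) ↦ ⟨hc.le, by rintro rfl; simp at hc⟩) (fun c hc ↦ ?_) ⟨hc, hc0⟩
  rw [Complex.closure_setOfPred_lt_re]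
  exact hc.1

end Transform

theorem two_mul_sqrt_two_pi_mul (x ν : ℝ) :
    2 * √(2 * π * x * (2 * π * ν)) = 4 * π * √(ν * x) := by
  have hsplit : 2 * π * x * (2 * π * ν) = (2 * π) ^ 2 * (ν * x) := by ring
  rw [hsplit, sqrt_mul (sq_nonneg _), sqrt_sq two_pi_pos.le]
  ring

theorem sqrt_div_sq_mul (n q : ℕ) (x : ℝ) : √(n / q ^ 2 * x) = √(n * x) / q := by
  rw [div_mul_eq_mul_div, sqrt_div' _ (sq_nonneg _), sqrt_sq q.cast_nonneg]

section BesselTransforms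

variable {g : 𝓢(ℝ, ℂ)} (hg : ∀ x ≤ 0, g x = 0) (hgc : HasCompactSupport g)
include hg hgc

theorem twistedMellinExt_fourier_add_fourierInv {c₁ c₂ : ℂ} (hc₁ : 0 ≤ c₁.re) (hc₁0 : c₁ ≠ 0)
    (hc₂ : 0 ≤ c₂.re) (hc₂0 : c₂ ≠ 0) :
    twistedMellinExt (𝓕 g) 0 c₁ + twistedMellinExt (𝓕⁻ g) 0 c₂ = ∫ x in Ioi (0 : ℝ),
      g x * (macdonaldKernel (2 * π * Complex.I * x) c₁ +
        macdonaldKernel (-(2 * π * Complex.I) * x) c₂) := by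
  have hω : (2 * π * Complex.I).re = 0 := by simp
  have hω0 : 2 * π * Complex.I ≠ 0 := Complex.two_pi_I_ne_zero
  have hω' : (-(2 * π * Complex.I)).re = 0 := by simp
  have hω0' : -(2 * π * Complex.I) ≠ 0 := neg_ne_zero.2 hω0
  rw [twistedMellinExt_zero_eq_integral (isLaplaceTransform_fourier hg) hω hω0 hg hgc hc₁ hc₁0,
    twistedMellinExt_zero_eq_integral (isLaplaceTransform_fourierInv hg) hω' hω0' hg hgc hc₂ hc₂0,
    ← integral_add
      (integrableOn_mul_macdonaldKernel hω hω0 hg hgc (mem_slitPlane_of_re_nonneg hc₁ hc₁0))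
      (integrableOn_mul_macdonaldKernel hω' hω0' hg hgc (mem_slitPlane_of_re_nonneg hc₂ hc₂0))]
  simp only [mul_add]

variable {ν : ℝ}

theorem twistedMellinExt_add_eq_integral_besselY0 (hν : 0 < ν) :
    twistedMellinExt (𝓕 g) 0 (2 * π * Complex.I * ν) +
        twistedMellinExt (𝓕⁻ g) 0 (2 * π * Complex.I * (-ν : ℝ)) =
      -(2 * π) * ∫ x in Ioi (0 : ℝ), g x * besselY0 (4 * π * √(ν * x)) := by
  rw [twistedMellinExt_fourier_add_fourierInv hg hgc (two_pi_I_mul_ofReal_re _).ge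
    (by simp [pi_ne_zero, hν.ne']) (two_pi_I_mul_ofReal_re _).ge (by simp [pi_ne_zero, hν.ne']),
    ← integral_const_mul]
  refine setIntegral_congr_fun measurableSet_Ioi fun x hx ↦ ?_
  have hkernel := macdonaldKernel_I_I_add (mul_pos two_pi_pos hx) (mul_pos two_pi_pos hν)
  rw [two_mul_sqrt_two_pi_mul] at hkernel
  push_cast at hkernel ⊢
  rw [mul_left_comm, ← hkernel]
  ring_nf

theorem twistedMellinExt_add_eq_integral_besselK0 (hν : 0 < ν) :
    twistedMellinExt (𝓕 g) 0 (2 * π * Complex.I * (-ν : ℝ)) +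
        twistedMellinExt (𝓕⁻ g) 0 (2 * π * Complex.I * ν) =
      4 * ∫ x in Ioi (0 : ℝ), g x * besselK0 (4 * π * √(ν * x)) := by
  rw [twistedMellinExt_fourier_add_fourierInv hg hgc (two_pi_I_mul_ofReal_re _).ge
    (by simp [pi_ne_zero, hν.ne']) (two_pi_I_mul_ofReal_re _).ge (by simp [pi_ne_zero, hν.ne']),
    ← integral_const_mul]
  refine setIntegral_congr_fun measurableSet_Ioi fun x hx ↦ ?_
  have hkernel := macdonaldKernel_I_neg_I_add (mul_pos two_pi_pos hx) (mul_pos two_pi_pos hν)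
  rw [two_mul_sqrt_two_pi_mul] at hkernel
  push_cast at hkernel ⊢
  rw [mul_left_comm, ← hkernel]
  ring_nf

end BesselTransforms

/-! ### The dual side -/

/-- The dual weight `g₁` of the Voronoi formula with modulus `q`. -/
def besselYTransform (g : ℝ → ℂ) (q n : ℕ) : ℂ :=
  -(2 * π / q) * ∫ x in Ioi (0 : ℝ), g x * besselY0 (4 * π * √(n * x) / q)

/-- The dual weight `g₂` of the Voronoi formula with modulus `q`. -/
def besselKTransform (g : ℝ → ℂ) (q n : ℕ) : ℂ :=
  4 / q * ∫ x in Ioi (0 : ℝ), g x * besselK0 (4 * π * √(n * x) / q)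

section DualSide

variable {g : 𝓢(ℝ, ℂ)} (hg : ∀ x ≤ 0, g x = 0) (hgc : HasCompactSupport g) {q : ℕ} (hq : 0 < q)
include hg hgc hq

theorem besselYTransform_eq (n : ℕ+) : besselYTransform g q n =
    1 / q * (twistedMellinExt (𝓕 g) 0 (2 * π * Complex.I * (n / q ^ 2 : ℝ)) +
      twistedMellinExt (𝓕⁻ g) 0 (2 * π * Complex.I * (-(n / q ^ 2) : ℝ))) := by
  have hν : (0 : ℝ) < n / q ^ 2 := div_pos (mod_cast n.pos) (pow_pos (mod_cast hq) 2)
  rw [twistedMellinExt_add_eq_integral_besselY0 hg hgc hν, besselYTransform, ← mul_assoc]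
  congr 1
  · ring
  · simp only [sqrt_div_sq_mul, mul_div_assoc]

theorem besselKTransform_eq (n : ℕ+) : besselKTransform g q n =
    1 / q * (twistedMellinExt (𝓕 g) 0 (2 * π * Complex.I * (-(n / q ^ 2) : ℝ)) +
      twistedMellinExt (𝓕⁻ g) 0 (2 * π * Complex.I * (n / q ^ 2 : ℝ))) := by
  have hν : (0 : ℝ) < n / q ^ 2 := div_pos (mod_cast n.pos) (pow_pos (mod_cast hq) 2)
  rw [twistedMellinExt_add_eq_integral_besselK0 hg hgc hν, besselKTransform, ← mul_assoc]
  congr 1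
  · ring
  · simp only [sqrt_div_sq_mul, mul_div_assoc]

theorem exists_norm_besselTransform_le : ∃ C, ∀ n : ℕ+,
    ‖besselYTransform g q n‖ ≤ C / n ^ 2 ∧ ‖besselKTransform g q n‖ ≤ C / n ^ 2 := by
  obtain ⟨C₁, hC₁⟩ := exists_norm_twistedMellinExt_two_pi_I_le (q := q) (𝓕 g) le_rfl
  obtain ⟨C₂, hC₂⟩ := exists_norm_twistedMellinExt_two_pi_I_le (q := q) (𝓕⁻ g) le_rfl
  refine ⟨‖(1 / q : ℂ)‖ * (C₁ + C₂), fun n ↦ ?_⟩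
  have habs : |(n / q ^ 2 : ℝ)| = n / q ^ 2 := abs_of_nonneg (by positivity)
  have habs_neg : |(-(n / q ^ 2) : ℝ)| = n / q ^ 2 := by rw [abs_neg, habs]
  have h₁ := hC₁ 0 le_rfl (by simp) n
  have h₂ := hC₂ 0 le_rfl (by simp) n
  rw [besselYTransform_eq hg hgc hq, besselKTransform_eq hg hgc hq, mul_div_assoc, add_div,
    norm_mul, norm_mul]
  constructor <;> gcongr
  · exact norm_add_le_of_le (h₁ _ habs) (h₂ _ habs_neg)
  · exact norm_add_le_of_le (h₁ _ habs_neg) (h₂ _ habs)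

theorem dualPair_fourier_add_dualPair_fourierInv (b : ℤ) (n : ℕ+) :
    dualPair (𝓕 g) q (-b) 0 n + dualPair (𝓕⁻ g) q b 0 n =
      q * (e2pi (-(n * b) / q) * besselYTransform g q n +
        e2pi (n * b / q) * besselKTransform g q n) := by
  have hqc : (q : ℂ) ≠ 0 := mod_cast hq.ne'
  rw [besselYTransform_eq hg hgc hq, besselKTransform_eq hg hgc hq, dualPair, dualPair]
  push_cast
  rw [mul_neg, neg_div, neg_neg]
  field_simp
  ring

theorem divisorSum_dualPair_add (b : ℤ) :
    divisorSum (dualPair (𝓕 g) q (-b) 0) 0 + divisorSum (dualPair (𝓕⁻ g) q b 0) 0 =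
      q * (∑' n : ℕ, (dd n : ℂ) * (e2pi (-(n * b) / q) * besselYTransform g q n) +
        ∑' n : ℕ, (dd n : ℂ) * (e2pi (n * b / q) * besselKTransform g q n)) := by
  obtain ⟨C₁, hC₁⟩ := exists_norm_dualPair_le (q := q) (𝓕 g) (-b) (R := 0) le_rfl
  obtain ⟨C₂, hC₂⟩ := exists_norm_dualPair_le (q := q) (𝓕⁻ g) b (R := 0) le_rfl
  obtain ⟨C, hC⟩ := exists_norm_besselTransform_le hg hgc hq
  have hY (n : ℕ+) : ‖e2pi (-((n : ℕ) * b) / q) * besselYTransform g q n‖ ≤ C / n ^ 2 := by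
    rw [norm_mul, norm_e2pi, one_mul]
    exact (hC n).1
  have hK (n : ℕ+) : ‖e2pi ((n : ℕ) * b / q) * besselKTransform g q n‖ ≤ C / n ^ 2 := by
    rw [norm_mul, norm_e2pi, one_mul]
    exact (hC n).2
  rw [← divisorSum_add (hC₁ 0 le_rfl (by simp)) (hC₂ 0 le_rfl (by simp)) le_rfl,
    ← divisorSum_zero hY, ← divisorSum_zero hK, ← divisorSum_add hY hK le_rfl,
    ← divisorSum_const_mul]
  exact divisorSum_congr (dualPair_fourier_add_dualPair_fourierInv hg hgc hq b) 0

theorem tsum_dd_mul_e2pi_mul {d b : ℤ} (hb : (q : ℤ) ∣ d * b - 1) :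
    ∑' n : ℕ, (dd n : ℂ) * e2pi (n * d / q) * g n =
      1 / q * (∫ x in Ioi (0 : ℝ),
        ((log x + 2 * eulerMascheroniConstant - 2 * log q : ℝ) : ℂ) * g x) +
      ∑' n : ℕ, (dd n : ℂ) * e2pi (-(n * b) / q) * besselYTransform g q n +
      ∑' n : ℕ, (dd n : ℂ) * e2pi (n * b / q) * besselKTransform g q n := by
  have hqc : (q : ℂ) ≠ 0 := mod_cast hq.ne'
  obtain ⟨C, hC⟩ := exists_norm_e2pi_mul_le g q d
  simp only [mul_assoc, add_sub_assoc]
  rw [← divisorSum_zero (f := fun n ↦ e2pi (n * d / q) * g n) hC, divisorSum_zero_eq hg hq hb,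
    divisorSum_dualPair_add hg hgc hq, ← mul_assoc, one_div_mul_cancel hqc, one_mul, ← add_assoc]

end DualSide

theorem dvd_mul_zmod_inv_val_sub_one {q : ℕ} (hq : q ≠ 0) {d : ℤ} (hd : Int.gcd d q = 1) :
    (q : ℤ) ∣ d * (((d : ZMod q)⁻¹).val : ℤ) - 1 := by
  have : NeZero q := ⟨hq⟩
  rw [← ZMod.intCast_eq_intCast_iff_dvd_sub]
  push_cast
  rw [ZMod.natCast_zmod_val]
  exact (ZMod.coe_int_mul_inv_eq_one (Int.isCoprime_iff_gcd_eq_one.2 hd)).symm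

end Voronoi

theorem voronoi_divisor_general (g : ℝ → ℂ) (hg : ContDiff ℝ (⊤ : ℕ∞) g)
    (hgc : HasCompactSupport g) (hg0 : ∀ x : ℝ, x ≤ 0 → g x = 0) (q : ℕ) (hq : 1 ≤ q) (d b : ℤ)
    (hb : (q : ℤ) ∣ d * b - 1) :
    ∑' n : ℕ, (dd n : ℂ) * e2pi (n * d / q) * g n =
      1 / q * (∫ x in Set.Ioi (0 : ℝ),
        ((log x + 2 * eulerMascheroniConstant - 2 * log q : ℝ) : ℂ) * g x) +
      ∑' n : ℕ, (dd n : ℂ) * e2pi (-(n * b) / q) *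
        (-(2 * π / q) * ∫ x in Set.Ioi (0 : ℝ), g x * besselY0 (4 * π * √(n * x) / q)) +
      ∑' n : ℕ, (dd n : ℂ) * e2pi (n * b / q) *
        (4 / q * ∫ x in Set.Ioi (0 : ℝ), g x * besselK0 (4 * π * √(n * x) / q)) :=
  Voronoi.tsum_dd_mul_e2pi_mul (g := hgc.toSchwartzMap hg) hg0 hgc hq hb

/-- Voronoi summation for the divisor function. -/
theorem voronoi_divisor (g : ℝ → ℝ) (hg : ContDiff ℝ (⊤ : ℕ∞) g)
    (hgc : HasCompactSupport g) (hg0 : ∀ x : ℝ, x ≤ 0 → g x = 0)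
    (q : ℕ) (hq : 1 ≤ q) (d : ℤ) (hd : Int.gcd d q = 1) :
    (∑' n : ℕ, (dd n : ℂ) * e2pi ((n : ℝ) * (d : ℝ) / q) * (g n : ℂ))
    = (1 / (q : ℂ)) *
        (((∫ x in Set.Ioi (0:ℝ),
          (Real.log x + 2 * Real.eulerMascheroniConstant - 2 * Real.log q) * g x) : ℝ) : ℂ)
      + (∑' n : ℕ, (dd n : ℂ) *
          e2pi (-(((n : ℝ) * ((((d : ZMod q))⁻¹).val : ℝ))) / q) *
          (((-(2 * Real.pi / q)) * ∫ x in Set.Ioi (0:ℝ),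
              g x * besselY0 (4 * Real.pi * Real.sqrt ((n : ℝ) * x) / q) : ℝ) : ℂ))
      + (∑' n : ℕ, (dd n : ℂ) *
          e2pi (((n : ℝ) * ((((d : ZMod q))⁻¹).val : ℝ)) / q) *
          ((((4 / (q:ℝ))) * ∫ x in Set.Ioi (0:ℝ),
              g x * besselK0 (4 * Real.pi * Real.sqrt ((n : ℝ) * x) / q) : ℝ) : ℂ)) := by
  simpa [← integral_complex_ofReal] using voronoi_divisor_general (fun x ↦ (g x : ℂ))
    (Complex.ofRealCLM.contDiff.comp hg) (hgc.comp_left Complex.ofReal_zero)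
    (by simpa using hg0) q hq d _
    (Voronoi.dvd_mul_zmod_inv_val_sub_one (by lia) hd)
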